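/- arXiv:2512.01614 — 4 statements merged into one kernel-verified Lean document; each statement's English description precedes it below -/
import Mathlib

section
/- Let G be a Halin graph. Then every subgraph H of G with Δ(H) ≥ 4 is Class 1, i.e. χ'(H) = Δ(H). -/
/-! The proof goes through Fournier's theorem: a graph of maximum degree `k` whose vertices of
degree `k` induce a forest has a proper `k`-edge-coloring (`fournier`).

*Reduction.* Let `H` be a subgraph of the Halin graph `G = T ∪ C` with `k = Δ(H) ≥ 4`. An edge of
`G` outside `T` lies on the cycle `C`, hence joins two leaves of `T`; a leaf of `T` has degree at
most `3` in `G`. So every edge of `H` between two vertices of degree `k` lies in the tree `T`, and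
Fournier's theorem applies. Planarity plays no role.

*Fournier's theorem.* Induct on the number of edges. As the vertices of degree `k` induce a
forest, some non-isolated vertex `v` has at most one neighbor of degree `k`. Deleting the edges at
`v` preserves the hypotheses, so the rest has a `k`-edge-coloring, and it remains to extend it to
the edges at `v` (`extend_to_vertex`). In the coloring of `G - v` every neighbor of `v` has at
least one missing color, and all but at most one have at least two.

*Extension* (the Ehrenfeucht–Faber–Kierstead argument for Vizing's theorem). It suffices to
recolor `G - v` so that distinct missing colors can be chosen at the neighbors of `v`
(`exists_distinct_missing`). Reserve two missing colors at each neighbor, except one color at one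
of them, and let `X_i` be the set of neighbors for which `i` is reserved. If `|X_i| > |X_j| + 2`,
then some component of the `(i,j)`-colored subgraph contains more of `X_i` than of `X_j`, and at
most two in total; exchanging `i` and `j` on it decreases `∑ |X_i|²`. So the sizes `|X_i|` may be
assumed to differ by at most `2` (`Admissible.balance`). Their sum is odd and less than twice the
number of colors, whence `|X_i| = 1` for some `i` (`exists_unique_holder`). Assign color `i` to the
unique vertex of `X_i`, delete the color class `i`, and induct on the number of colors. -/

open SimpleGraph Set

namespace EdgeTrans

universe u v

variable {V : Type*} {W : Type*}

/-- The degree of a vertex. -/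
noncomputable def deg (G : SimpleGraph V) (x : V) : ℕ :=
  (G.neighborSet x).ncard

/-- The maximum degree `Δ(G)`. -/
noncomputable def maxDeg (G : SimpleGraph V) : ℕ :=
  ⨆ x, deg G x

/-- A proper `t`-edge-coloring of `G`, using the colors `1, …, t`. -/
def IsProperEdgeColoring (G : SimpleGraph V) (t : ℕ) (f : Sym2 V → ℕ) : Prop :=
  (∀ e ∈ G.edgeSet, f e ∈ Finset.Icc 1 t) ∧
  ∀ e₁ ∈ G.edgeSet, ∀ e₂ ∈ G.edgeSet, e₁ ≠ e₂ → (∃ x, x ∈ e₁ ∧ x ∈ e₂) → f e₁ ≠ f e₂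

/-- The color class `M(f, j)`: the set of edges of `G` colored `j` by `f`. -/
def colorClass (G : SimpleGraph V) (f : Sym2 V → ℕ) (j : ℕ) : Set (Sym2 V) :=
  {e | e ∈ G.edgeSet ∧ f e = j}

/-- `f` and `g` differ by at most `n` color classes. -/
def DifferAtMost (G : SimpleGraph V) (n : ℕ) (f g : Sym2 V → ℕ) : Prop :=
  {j : ℕ | colorClass G f j ≠ colorClass G g j}.ncard ≤ n

/-- `f` and `g` are `n`-equivalent proper `t`-edge-colorings: one can be transformed into the
other by a sequence of proper `t`-edge-colorings in which consecutive colorings differ by at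
most `n` color classes. -/
def NEquiv (G : SimpleGraph V) (t n : ℕ) (f g : Sym2 V → ℕ) : Prop :=
  ∃ (k : ℕ) (F : ℕ → Sym2 V → ℕ), 1 ≤ k ∧ F 0 = f ∧ F k = g ∧
    (∀ i ≤ k, IsProperEdgeColoring G t (F i)) ∧
    ∀ i < k, DifferAtMost G n (F i) (F (i + 1))

/-- The chromatic index `χ'(G)`. -/
noncomputable def chromIdx (G : SimpleGraph V) : ℕ :=
  sInf {t | ∃ f, IsProperEdgeColoring G t f}

/-- The edge chromatic transformation index `χ'_trans(G)`: the minimum `n ≥ 2` such that any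
two proper `χ'(G)`-edge-colorings of `G` are `n`-equivalent. -/
noncomputable def transIdx (G : SimpleGraph V) : ℕ :=
  sInf {n | 2 ≤ n ∧ ∀ f g, IsProperEdgeColoring G (chromIdx G) f →
      IsProperEdgeColoring G (chromIdx G) g → NEquiv G (chromIdx G) n f g}

/-- `v` is a cutvertex of `G`: some two other vertices are connected in `G`, but every walk
between them passes through `v`. -/
def IsCutVertex (G : SimpleGraph V) (x : V) : Prop :=
  ∃ a b : V, a ≠ x ∧ b ≠ x ∧ G.Reachable a b ∧ ∀ p : G.Walk a b, x ∈ p.support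

/-- A block of `G`: a maximal connected subgraph without a cutvertex of the subgraph. -/
def IsBlock (G : SimpleGraph V) (B : G.Subgraph) : Prop :=
  B.coe.Connected ∧ (∀ x, ¬ IsCutVertex B.coe x) ∧
    ∀ B' : G.Subgraph, B ≤ B' → B'.coe.Connected →
      (∀ x, ¬ IsCutVertex B'.coe x) → B' = B

/-- Membership in the class `𝒜(q)`: every subgraph `H` of `G` with `Δ(H) ≤ q` has a proper
`q`-edge-coloring. -/
def MemA (q : ℕ) (G : SimpleGraph V) : Prop :=
  ∀ H : SimpleGraph V, H ≤ G → maxDeg H ≤ q → ∃ f, IsProperEdgeColoring H q f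

/-- `G` is `k`-degenerate: every (nonempty) subgraph of `G` contains a vertex of degree
at most `k` in the subgraph. -/
def Degenerate (k : ℕ) (G : SimpleGraph V) : Prop :=
  ∀ H : G.Subgraph, H.verts.Nonempty → ∃ x ∈ H.verts, (H.neighborSet x).ncard ≤ k

/-- `G` has `H` as a minor (via branch sets). -/
def HasMinor (G : SimpleGraph V) (H : SimpleGraph W) : Prop :=
  ∃ F : W → Set V,
    (∀ w, (G.induce (F w)).Connected) ∧
    (∀ w₁ w₂, w₁ ≠ w₂ → Disjoint (F w₁) (F w₂)) ∧
    (∀ w₁ w₂, H.Adj w₁ w₂ → ∃ v₁ ∈ F w₁, ∃ v₂ ∈ F w₂, G.Adj v₁ v₂)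

/-- Planarity, via Wagner's characterization: no `K₅` minor and no `K₃,₃` minor. -/
def Planar (G : SimpleGraph V) : Prop :=
  ¬ HasMinor G (completeGraph (Fin 5)) ∧
  ¬ HasMinor G (completeBipartiteGraph (Fin 3) (Fin 3))

/-- Series-parallel: no `K₄` minor. -/
def SeriesParallel (G : SimpleGraph V) : Prop :=
  ¬ HasMinor G (completeGraph (Fin 4))

/-- `G` is chordless: in every cycle, any two nonconsecutive vertices are non-adjacent,
i.e. every edge of `G` joining two vertices of a cycle is an edge of the cycle. -/
def Chordless (G : SimpleGraph V) : Prop :=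
  ∀ (x : V) (c : G.Walk x x), c.IsCycle →
    ∀ a ∈ c.support, ∀ b ∈ c.support, G.Adj a b → s(a, b) ∈ c.edges

/-- The wheel graph with hub `none` and cycle `ZMod n`. -/
def wheelGraph (n : ℕ) : SimpleGraph (Option (ZMod n)) :=
  SimpleGraph.fromRel (fun a b =>
    a = none ∨ ∃ i : ZMod n, a = some i ∧ b = some (i + 1))

/-- `G` is a wheel graph. -/
def IsWheel (G : SimpleGraph V) : Prop :=
  ∃ n : ℕ, 3 ≤ n ∧ Nonempty (G ≃g wheelGraph n)

/-- `G` is a Halin graph: `G` is planar and is the edge-disjoint union of a spanning tree `T`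
on at least four vertices having no vertex of degree two, and a cycle through exactly the
leaves of `T`. -/
def IsHalin (G : SimpleGraph V) : Prop :=
  Planar G ∧ 4 ≤ Nat.card V ∧
  ∃ T : SimpleGraph V, T ≤ G ∧ T.IsTree ∧ (∀ x : V, deg T x ≠ 2) ∧
    ∃ (x₀ : V) (c : G.Walk x₀ x₀), c.IsCycle ∧
      (∀ e : Sym2 V, e ∈ c.edges ↔ e ∈ G.edgeSet \ T.edgeSet) ∧
      (∀ u : V, u ∈ c.support ↔ deg T u = 1)

/-- The subgraph `G(f,g,t)`: the (spanning) subgraph of `G` with edge set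
`M(f,t) △ M(g,t)`. -/
def diffGraph (G : SimpleGraph V) (t : ℕ) (f g : Sym2 V → ℕ) : SimpleGraph V :=
  SimpleGraph.fromEdgeSet (symmDiff (colorClass G f t) (colorClass G g t))

/-- The walk `p` (a path or a cycle) is an entire connected component of its ambient graph:
every edge incident with a vertex of `p` is an edge of `p`. -/
def IsComponentWalk {G : SimpleGraph V} {u x : V} (p : G.Walk u x) : Prop :=
  ∀ a ∈ p.support, ∀ b, G.Adj a b → s(a, b) ∈ p.edges

/-- The color `i` is missing at `x` under `f`. -/
def MissingAt (G : SimpleGraph V) (f : Sym2 V → ℕ) (i : ℕ) (x : V) : Prop :=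
  ∀ e ∈ G.edgeSet, x ∈ e → f e ≠ i

/-- The path `p` is alternately colored with colors `a` and `b` under `f`
(an `(a,b)`-colored path). -/
def AltColored (f : Sym2 V → ℕ) (a b : ℕ) {G : SimpleGraph V} {u x : V}
    (p : G.Walk u x) : Prop :=
  (∀ i : Fin p.edges.length, f (p.edges.get i) = if Even i.1 then a else b) ∨
  (∀ i : Fin p.edges.length, f (p.edges.get i) = if Even i.1 then b else a)

/-- The path `p` is `t`-alternating: of any two consecutive edges, one is colored `t`. -/
def AltPath (f : Sym2 V → ℕ) (t : ℕ) {G : SimpleGraph V} {u x : V}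
    (p : G.Walk u x) : Prop :=
  ∀ (i : ℕ) (h : i + 1 < p.edges.length),
    f (p.edges.get ⟨i, Nat.lt_of_succ_lt h⟩) = t ∨ f (p.edges.get ⟨i + 1, h⟩) = t

/-- The cycle `c` is `t`-alternating: of any two (cyclically) consecutive edges, one is
colored `t`. -/
def IsAltCycle (f : Sym2 V → ℕ) (t : ℕ) {G : SimpleGraph V} {u : V}
    (c : G.Walk u u) : Prop :=
  ∀ i : Fin c.edges.length,
    f (c.edges.get i) = t ∨
    f (c.edges.get ⟨(i.1 + 1) % c.edges.length, Nat.mod_lt _ i.pos⟩) = t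

/-- `G` is 2-connected. -/
def TwoConnected (G : SimpleGraph V) : Prop :=
  G.Connected ∧ 3 ≤ Nat.card V ∧ ∀ x, ¬ IsCutVertex G x

/-- The union of the cycle `c` and the ears `P j` for `j < i`, as a subgraph. -/
noncomputable def earPrefix {G : SimpleGraph V} {v₀ : V} (c : G.Walk v₀ v₀) {n : ℕ}
    {x y : Fin n → V} (P : ∀ i : Fin n, G.Walk (x i) (y i)) (i : ℕ) : G.Subgraph :=
  c.toSubgraph ⊔ ⨆ j : Fin n, ⨆ _ : (j : ℕ) < i, (P j).toSubgraph

/-- `c, P 0, …, P (n-1)` is a `t`-alternating ear decomposition with respect to the cycle `c`: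
`c` is a `t`-alternating cycle, and each `P i` is a `(cᵢ, t)`-colored path (`cᵢ ≤ t - 1`) which
is an ear of `c ∪ P 0 ∪ … ∪ P i`, i.e. its endpoints lie in the previous part and its internal
vertices have degree 2 in `c ∪ P 0 ∪ … ∪ P i`. -/
def IsEarDecomp (G : SimpleGraph V) (f : Sym2 V → ℕ) (t : ℕ) {v₀ : V} (c : G.Walk v₀ v₀)
    (n : ℕ) (x y : Fin n → V) (P : ∀ i : Fin n, G.Walk (x i) (y i)) : Prop :=
  c.IsCycle ∧ IsAltCycle f t c ∧
  ∀ i : Fin n,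
    (P i).IsPath ∧ 1 ≤ (P i).length ∧
    (∃ ci : ℕ, ci ≤ t - 1 ∧ AltColored f ci t (P i)) ∧
    x i ∈ (earPrefix c P (i : ℕ)).verts ∧ y i ∈ (earPrefix c P (i : ℕ)).verts ∧
    ∀ a ∈ (P i).support, a ≠ x i → a ≠ y i →
      ((earPrefix c P ((i : ℕ) + 1)).neighborSet a).ncard = 2

/-- The line graph of `G`. -/
def lineGr (G : SimpleGraph V) : SimpleGraph G.edgeSet :=
  SimpleGraph.fromRel (fun e₁ e₂ => ∃ x, x ∈ (e₁ : Sym2 V) ∧ x ∈ (e₂ : Sym2 V))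

/-- The clique number (in `ℕ∞`). -/
noncomputable def cliqueNumE (G : SimpleGraph V) : ℕ∞ :=
  sSup {n : ℕ∞ | ∃ (m : ℕ) (s : Finset V), n = (m : ℕ∞) ∧ G.IsNClique m s}

/-- `G` is a perfect graph: every induced subgraph has chromatic number equal to its
clique number. -/
def IsPerfect (G : SimpleGraph V) : Prop :=
  ∀ s : Set V, (G.induce s).chromaticNumber = cliqueNumE (G.induce s)

/-- A partition of the vertex set of `G` into `n` cliques, each of size `sz`. -/
def IsCliquePartition (G : SimpleGraph V) (n sz : ℕ) (P : Set (Set V)) : Prop :=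
  P.ncard = n ∧ (∀ s ∈ P, G.IsClique s ∧ s.ncard = sz) ∧
  ⋃₀ P = Set.univ ∧ P.Pairwise fun s₁ s₂ => Disjoint s₁ s₂

/-- A proper vertex `n`-coloring of `G`, viewed as a partition of the vertex set into `n`
independent sets (color classes). -/
def IsIndepPartition (G : SimpleGraph V) (n : ℕ) (P : Set (Set V)) : Prop :=
  P.ncard = n ∧ (∀ s ∈ P, ∀ a ∈ s, ∀ b ∈ s, ¬ G.Adj a b) ∧
  ⋃₀ P = Set.univ ∧ P.Pairwise fun s₁ s₂ => Disjoint s₁ s₂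

/-- The graph `H(p,n)`: vertex classes `V_1, …, V_{2n}` of size `p` (indexed here by
`ZMod (2n)`), with two vertices adjacent iff they lie in the same class or in (cyclically)
consecutive classes. -/
def Hgraph (p n : ℕ) : SimpleGraph (ZMod (2 * n) × Fin p) :=
  SimpleGraph.fromRel (fun a b => a.1 = b.1 ∨ a.1 + 1 = b.1)

/-- The clique partition `{C_1, …, C_n}` of `H(p,n)`, `C_i = V_{2i-1} ∪ V_{2i}`. -/
def Cpart (p n : ℕ) : Set (Set (ZMod (2 * n) × Fin p)) :=
  {s | ∃ i : Fin n, s = {x | x.1 = ((2 * (i : ℕ) : ℕ) : ZMod (2 * n)) ∨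
      x.1 = ((2 * (i : ℕ) + 1 : ℕ) : ZMod (2 * n))}}

/-- The clique partition `{R_1, …, R_n}` of `H(p,n)`, `R_1 = V_{2n} ∪ V_1` and
`R_i = V_{2i-2} ∪ V_{2i-1}`. -/
def Rpart (p n : ℕ) : Set (Set (ZMod (2 * n) × Fin p)) :=
  {s | ∃ i : Fin n, s = {x | x.1 = ((2 * (i : ℕ) : ℕ) : ZMod (2 * n)) - 1 ∨
      x.1 = ((2 * (i : ℕ) : ℕ) : ZMod (2 * n))}}

/-- A multigraph on vertices `α` with edges `β`: each edge has two distinct endpoints. -/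
structure Multigraph (α : Type u) (β : Type v) where
  ends : β → Sym2 α
  not_isDiag : ∀ e, ¬ (ends e).IsDiag

namespace Multigraph

variable {α : Type u} {β : Type v}

/-- A proper `t`-edge-coloring of a multigraph, with colors `1, …, t`. -/
def IsProper (G : Multigraph α β) (t : ℕ) (f : β → ℕ) : Prop :=
  (∀ e, f e ∈ Finset.Icc 1 t) ∧
  ∀ e₁ e₂ : β, e₁ ≠ e₂ → (∃ x, x ∈ G.ends e₁ ∧ x ∈ G.ends e₂) → f e₁ ≠ f e₂

/-- The color class `M(f,j)` of a multigraph edge coloring. -/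
def mColorClass (f : β → ℕ) (j : ℕ) : Set β := {e | f e = j}

/-- `f` and `g` differ by at most `n` color classes. -/
def MDifferAtMost (n : ℕ) (f g : β → ℕ) : Prop :=
  {j : ℕ | mColorClass f j ≠ mColorClass g j}.ncard ≤ n

/-- `n`-equivalence of proper `t`-edge-colorings of a multigraph. -/
def MNEquiv (G : Multigraph α β) (t n : ℕ) (f g : β → ℕ) : Prop :=
  ∃ (k : ℕ) (F : ℕ → β → ℕ), 1 ≤ k ∧ F 0 = f ∧ F k = g ∧
    (∀ i ≤ k, G.IsProper t (F i)) ∧ ∀ i < k, MDifferAtMost n (F i) (F (i + 1))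

/-- The chromatic index of a multigraph. -/
noncomputable def mChromIdx (G : Multigraph α β) : ℕ :=
  sInf {t | ∃ f, G.IsProper t f}

/-- The edge chromatic transformation index of a multigraph. -/
noncomputable def mTransIdx (G : Multigraph α β) : ℕ :=
  sInf {n | 2 ≤ n ∧ ∀ f g, G.IsProper G.mChromIdx f → G.IsProper G.mChromIdx g →
      G.MNEquiv G.mChromIdx n f g}

/-- The degree of a vertex in a multigraph. -/
noncomputable def mDeg (G : Multigraph α β) (x : α) : ℕ := {e | x ∈ G.ends e}.ncard

/-- The underlying simple graph of a multigraph. -/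
def toSimple (G : Multigraph α β) : SimpleGraph α :=
  SimpleGraph.fromEdgeSet (Set.range G.ends)

end Multigraph



/-! ### Edge colorings with a prescribed palette -/

/-- `f` is a proper edge coloring of `G` with all colors in the palette `K`, expressed through
adjacency: edges at `a` of the same color have the same other endpoint. -/
def ProperOn (G : SimpleGraph V) (K : Finset ℕ) (f : Sym2 V → ℕ) : Prop :=
  (∀ a b, G.Adj a b → f s(a, b) ∈ K) ∧
  ∀ a b c, G.Adj a b → G.Adj a c → f s(a, b) = f s(a, c) → b = c

lemma missingAt_iff {G : SimpleGraph V} {f : Sym2 V → ℕ} {i : ℕ} {x : V} :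
    MissingAt G f i x ↔ ∀ b, G.Adj x b → f s(x, b) ≠ i := by
  constructor
  · intro h b hb
    exact h _ hb (by simp)
  · intro h e he hx
    obtain ⟨b, rfl⟩ := hx
    exact h b he

lemma ProperOn.isProperEdgeColoring {G : SimpleGraph V} {k : ℕ} {f : Sym2 V → ℕ}
    (h : ProperOn G (Finset.Icc 1 k) f) : IsProperEdgeColoring G k f := by
  refine ⟨?_, ?_⟩
  · intro e
    induction e with
    | _ a b => exact fun he => h.1 a b he
  · rintro e₁ h₁ e₂ h₂ hne ⟨x, ⟨b, rfl⟩, ⟨c, rfl⟩⟩ heq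
    exact hne (by rw [h.2 x b c h₁ h₂ heq])

/-- `f` is a proper coloring of `G` from the palette `K`, and every vertex `u ∈ N` carries a set
`M u ⊆ K` of colors missing at `u`. -/
def Admissible (G : SimpleGraph V) (K : Finset ℕ) (N : Finset V) (M : V → Finset ℕ)
    (f : Sym2 V → ℕ) : Prop :=
  ProperOn G K f ∧ ∀ u ∈ N, M u ⊆ K ∧ ∀ i ∈ M u, MissingAt G f i u

/-- The vertices of `N` whose reserved set of missing colors contains `c`. -/
def holders (N : Finset V) (M : V → Finset ℕ) (c : ℕ) : Finset V :=
  N.filter (fun u => c ∈ M u)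

/-! ### Kempe changes -/

/-- The subgraph of edges colored `i` or `j`. -/
def kempe (G : SimpleGraph V) (f : Sym2 V → ℕ) (i j : ℕ) : SimpleGraph V where
  Adj a b := G.Adj a b ∧ (f s(a, b) = i ∨ f s(a, b) = j)
  symm := ⟨fun a b h => by rw [Sym2.eq_swap]; exact ⟨h.1.symm, h.2⟩⟩
  loopless := ⟨fun a h => G.loopless.irrefl a h.1⟩

open Classical in
/-- In a graph of maximum degree at most `2`, the degree deficiencies `2 - deg u` sum to at most
`2` over a connected component, since a component on `n` vertices has at least `n - 1` edges. -/
lemma sum_component_le_two [Fintype V] (L : SimpleGraph V) (w : V → ℕ)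
    (hw : ∀ u, w u + L.degree u ≤ 2) (C : L.ConnectedComponent) :
    ∑ u : C, w u ≤ 2 := by
  have hconn : C.toSimpleGraph.Connected := C.connected_toSimpleGraph
  have h1 := hconn.card_vert_le_card_edgeSet_add_one
  have h2 := C.toSimpleGraph.sum_degrees_eq_twice_card_edges
  have h3 : ∀ u : C, C.toSimpleGraph.degree u ≤ L.degree u := by
    intro u
    rw [← SimpleGraph.card_neighborFinset_eq_degree, ← SimpleGraph.card_neighborFinset_eq_degree]
    refine Finset.card_le_card_of_injOn (fun x => (x : V)) ?_ Subtype.val_injective.injOn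
    intro x hx
    simp only [Finset.mem_coe, SimpleGraph.mem_neighborFinset] at hx ⊢
    exact hx
  have h4 : ∑ u : C, (w u + C.toSimpleGraph.degree u) ≤ ∑ _u : C, 2 :=
    Finset.sum_le_sum fun u _ => (Nat.add_le_add_left (h3 u) _).trans (hw u)
  rw [Finset.sum_add_distrib, h2, Finset.sum_const, Finset.card_univ] at h4
  rw [Nat.card_eq_fintype_card, Nat.card_eq_fintype_card, ← SimpleGraph.edgeFinset_card] at h1
  simp only [smul_eq_mul] at h4
  omega

open Classical in
/-- A Kempe change on a union `S` of components of the `(i,j)`-colored subgraph, with the reserved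
missing colors changed accordingly. -/
lemma Admissible.swap {G : SimpleGraph V} {K : Finset ℕ} {N : Finset V} {M : V → Finset ℕ}
    {f : Sym2 V → ℕ} (h : Admissible G K N M f) {i j : ℕ} (hi : i ∈ K) (hj : j ∈ K)
    (S : Set V) (hS : ∀ a b, (kempe G f i j).Adj a b → (a ∈ S ↔ b ∈ S)) :
    ∃ f', Admissible G K N
      (fun u => if u ∈ S then (M u).image (Equiv.swap i j) else M u) f' := by
  have hK : ∀ c ∈ K, Equiv.swap i j c ∈ K := by
    intro c hc
    rw [Equiv.swap_apply_def]
    split_ifs <;> assumption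
  let f' : Sym2 V → ℕ := fun e => if ∃ x ∈ e, x ∈ S then Equiv.swap i j (f e) else f e
  -- On an edge leaving `S` the color is neither `i` nor `j`, so the change is invisible there.
  have key : ∀ a b, G.Adj a b →
      f' s(a, b) = if a ∈ S then Equiv.swap i j (f s(a, b)) else f s(a, b) := by
    intro a b hab
    by_cases ha : a ∈ S
    · have : ∃ x ∈ s(a, b), x ∈ S := ⟨a, by simp, ha⟩
      simp only [f', if_pos this, if_pos ha]
    · by_cases hb : b ∈ S
      · have h1 : ∃ x ∈ s(a, b), x ∈ S := ⟨b, by simp, hb⟩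
        simp only [f', if_pos h1, if_neg ha]
        have h2 : ¬ (kempe G f i j).Adj a b := fun hk => ha ((hS a b hk).2 hb)
        have h3 : ¬ (f s(a, b) = i ∨ f s(a, b) = j) := fun hk => h2 ⟨hab, hk⟩
        push Not at h3
        exact Equiv.swap_apply_of_ne_of_ne h3.1 h3.2
      · have h1 : ¬ ∃ x ∈ s(a, b), x ∈ S := by
          rintro ⟨x, hx, hxS⟩
          rcases Sym2.mem_iff.1 hx with rfl | rfl
          · exact ha hxS
          · exact hb hxS
        simp only [f', if_neg h1, if_neg ha]
  refine ⟨f', ⟨?_, ?_⟩, ?_⟩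
  · intro a b hab
    rw [key a b hab]
    split_ifs
    · exact hK _ (h.1.1 a b hab)
    · exact h.1.1 a b hab
  · intro a b c hab hac heq
    rw [key a b hab, key a c hac] at heq
    refine h.1.2 a b c hab hac ?_
    split_ifs at heq
    · exact (Equiv.swap i j).injective heq
    · exact heq
  · intro u hu
    obtain ⟨h1, h2⟩ := h.2 u hu
    simp only [missingAt_iff] at h2 ⊢
    split_ifs with huS
    · refine ⟨?_, ?_⟩
      · intro c hc
        obtain ⟨d, hd, rfl⟩ := Finset.mem_image.1 hc
        exact hK d (h1 hd)
      · intro c hc b hb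
        obtain ⟨d, hd, rfl⟩ := Finset.mem_image.1 hc
        rw [key u b hb, if_pos huS]
        exact fun heq => h2 d hd b hb ((Equiv.swap i j).injective heq)
    · refine ⟨h1, ?_⟩
      intro c hc b hb
      rw [key u b hb, if_neg huS]
      exact h2 c hc b hb

open Classical in
/-- Each component of the `(i,j)`-colored subgraph is a path or a cycle, so at most two of its
vertices (with multiplicity) miss `i` or `j`. -/
lemma holders_component_le_two [Fintype V] {G : SimpleGraph V} {K : Finset ℕ} {N : Finset V}
    {M : V → Finset ℕ} {f : Sym2 V → ℕ} (h : Admissible G K N M f) {i j : ℕ} (hij : i ≠ j)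
    (C : (kempe G f i j).ConnectedComponent) :
    ((holders N M i).filter (· ∈ C.supp)).card +
      ((holders N M j).filter (· ∈ C.supp)).card ≤ 2 := by
  let A : V → Finset ℕ := fun u => if u ∈ N then ({i, j} : Finset ℕ) ∩ M u else ∅
  have hA : ∀ u, A u ⊆ {i, j} := by
    intro u
    simp only [A]
    split_ifs
    · exact Finset.inter_subset_left
    · exact Finset.empty_subset _
  have hw : ∀ u, (A u).card + (kempe G f i j).degree u ≤ 2 := by
    intro u
    have h1 : (kempe G f i j).degree u ≤ (({i, j} : Finset ℕ) \ A u).card := by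
      rw [← SimpleGraph.card_neighborFinset_eq_degree]
      refine Finset.card_le_card_of_injOn (fun b => f s(u, b)) ?_ ?_
      · intro b hb
        simp only [Finset.mem_coe, SimpleGraph.mem_neighborFinset] at hb
        simp only [Finset.mem_coe, Finset.mem_sdiff, Finset.mem_insert, Finset.mem_singleton]
        refine ⟨hb.2, ?_⟩
        intro hmem
        simp only [A] at hmem
        split_ifs at hmem with hu
        · exact missingAt_iff.1 ((h.2 u hu).2 _ (Finset.mem_inter.1 hmem).2) b hb.1 rfl
        · simp at hmem
      · intro b hb c hc heq
        simp only [Finset.mem_coe, SimpleGraph.mem_neighborFinset] at hb hc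
        exact h.1.2 u b c hb.1 hc.1 heq
    have h2 := Finset.card_sdiff_add_card_eq_card (hA u)
    rw [Finset.card_pair hij] at h2
    omega
  have h1 := sum_component_le_two _ _ hw C
  have h2 : ∑ u : C, (A u).card = ∑ u ∈ Finset.univ.filter (· ∈ C.supp), (A u).card := by
    symm
    exact Finset.sum_subtype (Finset.univ.filter (· ∈ C.supp)) (fun x => by simp; rfl)
      (fun u => (A u).card)
  have h3 : ∀ u, (A u).card =
      (if u ∈ holders N M i then 1 else 0) + (if u ∈ holders N M j then 1 else 0) := by
    intro u
    by_cases hu : u ∈ N <;> by_cases h1 : i ∈ M u <;> by_cases h2 : j ∈ M u <;>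
      simp [A, holders, hu, h1, h2, Finset.insert_inter_of_mem, Finset.insert_inter_of_notMem,
        Finset.singleton_inter_of_mem, Finset.singleton_inter_of_notMem, hij]
  have h4 : ∀ c, ((holders N M c).filter (· ∈ C.supp)).card =
      ∑ u ∈ Finset.univ.filter (· ∈ C.supp), if u ∈ holders N M c then 1 else 0 := by
    intro c
    rw [Finset.sum_boole, Finset.filter_filter]
    simp only [Nat.cast_id]
    congr 1
    ext u
    simp [and_comm]
  rw [h4, h4, ← Finset.sum_add_distrib]
  simp only [← h3]
  rw [← h2]
  exact h1

open Classical in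
/-- If far more reserved sets contain `i` than `j`, a Kempe change on a suitable component
decreases the sum of the squares of the numbers of holders. -/
lemma Admissible.improve [Fintype V] {G : SimpleGraph V} {K : Finset ℕ} {N : Finset V}
    {M : V → Finset ℕ} {f : Sym2 V → ℕ} (h : Admissible G K N M f) {i j : ℕ} (hi : i ∈ K)
    (hj : j ∈ K) (hlt : (holders N M j).card + 2 < (holders N M i).card) :
    ∃ M' f', Admissible G K N M' f' ∧ (∀ u, (M' u).card = (M u).card) ∧
      ∑ c ∈ K, (holders N M' c).card ^ 2 < ∑ c ∈ K, (holders N M c).card ^ 2 := by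
  have hij : i ≠ j := by
    rintro rfl
    omega
  obtain ⟨C, hC⟩ : ∃ C : (kempe G f i j).ConnectedComponent,
      ((holders N M j).filter (· ∈ C.supp)).card <
        ((holders N M i).filter (· ∈ C.supp)).card := by
    by_contra! hcon
    have hfib : ∀ c, (holders N M c).card =
        ∑ C : (kempe G f i j).ConnectedComponent,
          ((holders N M c).filter (· ∈ C.supp)).card := by
      intro c
      simp only [ConnectedComponent.mem_supp_iff]
      exact Finset.card_eq_sum_card_fiberwise
        (f := fun u => (kempe G f i j).connectedComponentMk u) (t := Finset.univ) (by simp)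
    have := Finset.sum_le_sum (s := Finset.univ) (fun C _ => hcon C)
    rw [← hfib, ← hfib] at this
    omega
  have h2 := holders_component_le_two h hij C
  obtain ⟨f', hf'⟩ := h.swap hi hj C.supp (by
    intro a b hab
    simp only [ConnectedComponent.mem_supp_iff]
    rw [ConnectedComponent.sound hab.reachable])
  set M' : V → Finset ℕ :=
    fun u => if u ∈ C.supp then (M u).image (Equiv.swap i j) else M u with hM'
  refine ⟨M', f', by convert hf', ?_, ?_⟩
  · intro u
    simp only [hM']
    split_ifs
    · exact Finset.card_image_of_injective _ (Equiv.swap i j).injective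
    · rfl
  have hmem : ∀ u c, c ∈ M' u ↔ if u ∈ C.supp then Equiv.swap i j c ∈ M u else c ∈ M u := by
    intro u c
    simp only [hM']
    split_ifs
    · rw [Finset.mem_image]
      constructor
      · rintro ⟨d, hd, rfl⟩
        simpa using hd
      · intro hc
        exact ⟨_, hc, by simp⟩
    · rfl
  have hcard : ∀ c, (holders N M' c).card =
      ((holders N M (Equiv.swap i j c)).filter (· ∈ C.supp)).card +
        ((holders N M c).filter (· ∉ C.supp)).card := by
    intro c
    rw [← Finset.card_filter_add_card_filter_not (s := holders N M' c) (· ∈ C.supp)]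
    congr 2
    · ext u
      simp only [holders, Finset.mem_filter, hmem]
      by_cases hu : u ∈ C.supp <;> simp [hu]
    · ext u
      simp only [holders, Finset.mem_filter, hmem]
      by_cases hu : u ∈ C.supp <;> simp [hu]
  have hsplit : ∀ c, ((holders N M c).filter (· ∈ C.supp)).card +
      ((holders N M c).filter (· ∉ C.supp)).card = (holders N M c).card := fun c =>
    Finset.card_filter_add_card_filter_not (s := holders N M c) (· ∈ C.supp)
  have hsub : ({i, j} : Finset ℕ) ⊆ K := by
    intro c hc
    simp only [Finset.mem_insert, Finset.mem_singleton] at hc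
    rcases hc with rfl | rfl <;> assumption
  rw [← Finset.sum_sdiff hsub, ← Finset.sum_sdiff hsub (f := fun c => (holders N M c).card ^ 2)]
  have hrest : ∑ c ∈ K \ {i, j}, (holders N M' c).card ^ 2 =
      ∑ c ∈ K \ {i, j}, (holders N M c).card ^ 2 := by
    refine Finset.sum_congr rfl fun c hc => ?_
    simp only [Finset.mem_sdiff, Finset.mem_insert, Finset.mem_singleton, not_or] at hc
    rw [hcard, Equiv.swap_apply_of_ne_of_ne hc.2.1 hc.2.2, hsplit]
  rw [hrest, Finset.sum_pair hij, Finset.sum_pair hij]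
  refine Nat.add_lt_add_left ?_ _
  have hi' := hcard i
  have hj' := hcard j
  rw [Equiv.swap_apply_left] at hi'
  rw [Equiv.swap_apply_right] at hj'
  have hsi := hsplit i
  have hsj := hsplit j
  generalize ((holders N M i).filter (· ∈ C.supp)).card = p at *
  generalize ((holders N M j).filter (· ∈ C.supp)).card = q at *
  generalize ((holders N M i).filter (· ∉ C.supp)).card = r at *
  generalize ((holders N M j).filter (· ∉ C.supp)).card = s at *
  rw [hi', hj', ← hsi, ← hsj]
  rw [← hsi, ← hsj] at hlt
  have hq : q = 0 := by omega
  subst hq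
  have hp : p = 1 ∨ p = 2 := by omega
  rcases hp with rfl | rfl <;> nlinarith

/-- After finitely many Kempe changes the numbers of holders differ pairwise by at most `2`. -/
lemma Admissible.balance [Fintype V] {G : SimpleGraph V} {K : Finset ℕ} {N : Finset V} :
    ∀ {M : V → Finset ℕ} {f : Sym2 V → ℕ}, Admissible G K N M f →
    ∃ M' f', Admissible G K N M' f' ∧ (∀ u, (M' u).card = (M u).card) ∧
      ∀ i ∈ K, ∀ j ∈ K, (holders N M' i).card ≤ (holders N M' j).card + 2 := by
  intro M f h
  induction hn : ∑ c ∈ K, (holders N M c).card ^ 2 using Nat.strong_induction_on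
    generalizing M f with
  | _ n ih =>
    by_cases hb : ∀ i ∈ K, ∀ j ∈ K, (holders N M i).card ≤ (holders N M j).card + 2
    · exact ⟨M, f, h, fun _ => rfl, hb⟩
    · push Not at hb
      obtain ⟨i, hi, j, hj, hlt⟩ := hb
      obtain ⟨M₁, f₁, h₁, hc₁, hs₁⟩ := h.improve hi hj hlt
      obtain ⟨M₂, f₂, h₂, hc₂, hb₂⟩ := ih _ (hn ▸ hs₁) h₁ rfl
      exact ⟨M₂, f₂, h₂, fun u => (hc₂ u).trans (hc₁ u), hb₂⟩

/-! ### Distinct missing colors and extension to a new vertex -/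

/-- Double counting: if one reserved set is a singleton and the others are pairs, and `N` has at
most `|K|` elements, then in a balanced configuration some color has exactly one holder. -/
lemma exists_unique_holder {K : Finset ℕ} {N : Finset V} {M : V → Finset ℕ}
    (hMK : ∀ u ∈ N, M u ⊆ K) {u₁ : V} (hu₁ : u₁ ∈ N) (h1 : (M u₁).card = 1)
    (h2 : ∀ u ∈ N, u ≠ u₁ → (M u).card = 2) (hNK : N.card ≤ K.card)
    (hb : ∀ i ∈ K, ∀ j ∈ K, (holders N M i).card ≤ (holders N M j).card + 2) :
    ∃ i ∈ K, (holders N M i).card = 1 := by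
  classical
  have hsum : ∑ c ∈ K, (holders N M c).card = ∑ u ∈ N, (M u).card := by
    have := Finset.sum_card_bipartiteAbove_eq_sum_card_bipartiteBelow
      (s := N) (t := K) (fun u c => c ∈ M u)
    rw [show (∑ c ∈ K, (holders N M c).card) =
      ∑ c ∈ K, (Finset.bipartiteBelow (fun u c => c ∈ M u) N c).card from rfl, ← this]
    refine Finset.sum_congr rfl fun u hu => ?_
    congr 1
    ext c
    simp only [Finset.mem_bipartiteAbove]
    exact ⟨fun hc => hc.2, fun hc => ⟨hMK u hu hc, hc⟩⟩
  have hodd : ∑ u ∈ N, (M u).card + 1 = 2 * N.card := by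
    rw [← Finset.sum_erase_add _ _ hu₁, h1, Finset.sum_congr rfl
      (fun u hu => h2 u (Finset.mem_of_mem_erase hu) (Finset.ne_of_mem_erase hu)),
      Finset.sum_const, Finset.card_erase_of_mem hu₁]
    have : 0 < N.card := Finset.card_pos.2 ⟨_, hu₁⟩
    simp only [smul_eq_mul]
    omega
  by_contra! hne
  obtain ⟨i, hi, hi1⟩ : ∃ i ∈ K, (holders N M i).card < 2 := by
    by_contra! hge
    have := Finset.sum_le_sum hge
    rw [hsum, Finset.sum_const, smul_eq_mul] at this
    omega
  have heven : ∀ c ∈ K, 2 ∣ (holders N M c).card := by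
    intro c hc
    have h3 := hb c hc i hi
    have h4 := hne i hi
    have h5 := hne c hc
    have h6 : (holders N M c).card = 0 ∨ (holders N M c).card = 2 := by omega
    rcases h6 with h6 | h6 <;> simp [h6]
  have := Finset.dvd_sum heven
  rw [hsum] at this
  omega

/-- If `|N| ≤ |K|`, every vertex of `N` has at least one missing color, and all but at most one
have at least two, then after recoloring, distinct missing colors can be chosen at the vertices
of `N`. -/
theorem exists_distinct_missing [Fintype V] :
    ∀ (n : ℕ) (G : SimpleGraph V) (K : Finset ℕ) (N : Finset V) (M : V → Finset ℕ)
      (f : Sym2 V → ℕ) (u₀ : V), K.card = n → Admissible G K N M f → N.card ≤ K.card →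
      (∀ u ∈ N, 1 ≤ (M u).card) → (∀ u ∈ N, u ≠ u₀ → 2 ≤ (M u).card) →
      ∃ (f' : Sym2 V → ℕ) (φ : V → ℕ), ProperOn G K f' ∧
        (∀ u ∈ N, φ u ∈ K ∧ MissingAt G f' (φ u) u) ∧
        ∀ u ∈ N, ∀ w ∈ N, φ u = φ w → u = w := by
  classical
  intro n
  induction n with
  | zero =>
    intro G K N M f u₀ hK h hNK _ _
    have : N = ∅ := Finset.card_eq_zero.1 (by omega)
    subst this
    exact ⟨f, fun _ => 0, h.1, by simp, by simp⟩
  | succ n ih =>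
    intro G K N M f u₀ hK h hNK hM1 hM2
    rcases N.eq_empty_or_nonempty with rfl | hN
    · exact ⟨f, fun _ => 0, h.1, by simp, by simp⟩
    obtain ⟨u₁, hu₁, hu₁'⟩ : ∃ u₁ ∈ N, ∀ u ∈ N, u ≠ u₁ → 2 ≤ (M u).card := by
      by_cases hu : u₀ ∈ N
      · exact ⟨u₀, hu, hM2⟩
      · obtain ⟨x, hx⟩ := hN
        exact ⟨x, hx, fun u huN _ => hM2 u huN (by rintro rfl; exact hu huN)⟩
    -- Trim the reserved sets to size exactly one at `u₁` and two elsewhere, to get odd total size.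
    have htrim : ∀ u, ∃ A : Finset ℕ, u ∈ N → A ⊆ M u ∧ A.card = if u = u₁ then 1 else 2 := by
      intro u
      by_cases hu : u ∈ N
      · have : (if u = u₁ then 1 else 2) ≤ (M u).card := by
          split_ifs with he
          · exact hM1 u hu
          · exact hu₁' u hu he
        obtain ⟨A, hA⟩ := Finset.exists_subset_card_eq this
        exact ⟨A, fun _ => hA⟩
      · exact ⟨∅, fun hu' => absurd hu' hu⟩
    choose M₀ hM₀ using htrim
    have h₀ : Admissible G K N M₀ f :=
      ⟨h.1, fun u hu => ⟨(hM₀ u hu).1.trans (h.2 u hu).1,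
        fun i hi => (h.2 u hu).2 i ((hM₀ u hu).1 hi)⟩⟩
    obtain ⟨M₁, f₁, h₁, hc₁, hb₁⟩ := h₀.balance
    have hcard1 : (M₁ u₁).card = 1 := by rw [hc₁, (hM₀ u₁ hu₁).2, if_pos rfl]
    have hcard2 : ∀ u ∈ N, u ≠ u₁ → (M₁ u).card = 2 := fun u hu hne => by
      rw [hc₁, (hM₀ u hu).2, if_neg hne]
    obtain ⟨i, hi, hi1⟩ := exists_unique_holder (fun u hu => (h₁.2 u hu).1) hu₁ hcard1 hcard2
      hNK hb₁
    obtain ⟨z, hz⟩ := Finset.card_eq_one.1 hi1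
    have hzmem : ∀ u ∈ N, i ∈ M₁ u ↔ u = z := by
      intro u hu
      rw [← Finset.mem_singleton, ← hz, holders, Finset.mem_filter]
      simp [hu]
    have hzN : z ∈ N := by
      have : z ∈ holders N M₁ i := by rw [hz]; simp
      exact (Finset.mem_filter.1 this).1
    -- Give color `i` to `z`, discard the color class `i`, and recurse with the other colors.
    let G' : SimpleGraph V :=
      { Adj := fun a b => G.Adj a b ∧ f₁ s(a, b) ≠ i
        symm := ⟨fun a b hab => by rw [Sym2.eq_swap]; exact ⟨hab.1.symm, hab.2⟩⟩
        loopless := ⟨fun a ha => G.loopless.irrefl a ha.1⟩ }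
    have h' : Admissible G' (K.erase i) (N.erase z) M₁ f₁ := by
      refine ⟨⟨fun a b hab => Finset.mem_erase.2 ⟨hab.2, h₁.1.1 a b hab.1⟩,
        fun a b c hab hac => h₁.1.2 a b c hab.1 hac.1⟩, ?_⟩
      intro u hu
      obtain ⟨huz, huN⟩ := Finset.mem_erase.1 hu
      refine ⟨fun c hc => Finset.mem_erase.2 ⟨?_, (h₁.2 u huN).1 hc⟩, ?_⟩
      · rintro rfl
        exact huz ((hzmem u huN).1 hc)
      · intro c hc
        exact missingAt_iff.2 fun b hb => missingAt_iff.1 ((h₁.2 u huN).2 c hc) b hb.1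
    have hM1' : ∀ u ∈ N, 1 ≤ (M₁ u).card := by
      intro u hu
      by_cases he : u = u₁
      · rw [he, hcard1]
      · rw [hcard2 u hu he]
        norm_num
    obtain ⟨f₂, φ, hf₂, hφ, hinj⟩ := ih G' (K.erase i) (N.erase z) M₁ f₁ u₁
      (by rw [Finset.card_erase_of_mem hi]; omega) h'
      (by rw [Finset.card_erase_of_mem hi, Finset.card_erase_of_mem hzN]; omega)
      (fun u hu => hM1' u (Finset.mem_of_mem_erase hu))
      (fun u hu hne => (hcard2 u (Finset.mem_of_mem_erase hu) hne).ge)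
    refine ⟨fun e => if f₁ e = i then i else f₂ e, fun u => if u = z then i else φ u,
      ⟨?_, ?_⟩, ?_, ?_⟩
    · intro a b hab
      dsimp only
      split_ifs with he
      · exact hi
      · exact Finset.mem_of_mem_erase (hf₂.1 a b ⟨hab, he⟩)
    · intro a b c hab hac heq
      dsimp only at heq
      split_ifs at heq with hb hc hc
      · exact h₁.1.2 a b c hab hac (hb.trans hc.symm)
      · exact absurd heq.symm (Finset.ne_of_mem_erase (hf₂.1 a c ⟨hac, hc⟩))
      · exact absurd heq (Finset.ne_of_mem_erase (hf₂.1 a b ⟨hab, hb⟩))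
      · exact hf₂.2 a b c ⟨hab, hb⟩ ⟨hac, hc⟩ heq
    · intro u hu
      dsimp only
      rw [missingAt_iff]
      by_cases huz : u = z
      · rw [if_pos huz]
        refine ⟨hi, fun b hb => ?_⟩
        have hne := missingAt_iff.1 ((h₁.2 u hu).2 i ((hzmem u hu).2 huz)) b hb
        rw [if_neg hne]
        exact Finset.ne_of_mem_erase (hf₂.1 u b ⟨hb, hne⟩)
      · rw [if_neg huz]
        obtain ⟨h3, h4⟩ := hφ u (Finset.mem_erase.2 ⟨huz, hu⟩)
        refine ⟨Finset.mem_of_mem_erase h3, fun b hb => ?_⟩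
        split_ifs with he
        · exact (Finset.ne_of_mem_erase h3).symm
        · exact missingAt_iff.1 h4 b ⟨hb, he⟩
    · intro u hu w hw heq
      dsimp only at heq
      split_ifs at heq with h3 h4 h4
      · rw [h3, h4]
      · exact absurd heq.symm (Finset.ne_of_mem_erase (hφ w (Finset.mem_erase.2 ⟨h4, hw⟩)).1)
      · exact absurd heq (Finset.ne_of_mem_erase (hφ u (Finset.mem_erase.2 ⟨h3, hu⟩)).1)
      · exact hinj u (Finset.mem_erase.2 ⟨h3, hu⟩) w (Finset.mem_erase.2 ⟨h4, hw⟩) heq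

/-- The graph `G` with all edges at `v` deleted; `v` remains as an isolated vertex. -/
def isolate (G : SimpleGraph V) (v : V) : SimpleGraph V where
  Adj a b := G.Adj a b ∧ a ≠ v ∧ b ≠ v
  symm := ⟨fun _ _ h => ⟨h.1.symm, h.2.2, h.2.1⟩⟩
  loopless := ⟨fun a h => G.loopless.irrefl a h.1⟩

/-- If all degrees are at most `k`, and `v` has at most one neighbor (namely `u₀`) of degree `k`,
then a `k`-edge-coloring of `G - v` yields one of `G`. -/
theorem extend_to_vertex [Fintype V] {G : SimpleGraph V} {k : ℕ} {v u₀ : V} {f : Sym2 V → ℕ}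
    (hdeg : ∀ x, deg G x ≤ k) (hv : ∀ u, G.Adj v u → u ≠ u₀ → deg G u < k)
    (hf : ProperOn (isolate G v) (Finset.Icc 1 k) f) :
    ∃ f', ProperOn G (Finset.Icc 1 k) f' := by
  classical
  let N : Finset V := Finset.univ.filter (fun u => G.Adj v u)
  have hN : ∀ u, u ∈ N ↔ G.Adj v u := fun u => by simp [N]
  let M : V → Finset ℕ := fun u =>
    (Finset.Icc 1 k).filter (fun i => MissingAt (isolate G v) f i u)
  have hM : ∀ u, G.Adj v u → k + 1 ≤ (M u).card + deg G u := by
    intro u hu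
    have h1 : deg (isolate G v) u < deg G u := by
      refine Set.ncard_lt_ncard ?_ (Set.toFinite _)
      refine ⟨fun b hb => hb.1, fun hsub => ?_⟩
      exact (hsub (show v ∈ G.neighborSet u from hu.symm)).2.2 rfl
    have h2 : (Finset.Icc 1 k \ M u).card ≤ deg (isolate G v) u := by
      unfold deg
      rw [← Set.ncard_coe_finset]
      refine (Set.ncard_le_ncard (t := (fun b => f s(u, b)) '' (isolate G v).neighborSet u)
        ?_ (Set.toFinite _)).trans (Set.ncard_image_le (Set.toFinite _))
      intro c hc
      simp only [M, Finset.coe_sdiff, Set.mem_sdiff, Finset.mem_coe, Finset.mem_filter,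
        not_and, missingAt_iff] at hc
      have h3 := hc.2 hc.1
      push Not at h3
      exact h3
    have h4 := Finset.card_sdiff_add_card_eq_card
      (show M u ⊆ Finset.Icc 1 k from Finset.filter_subset _ _)
    rw [Nat.card_Icc] at h4
    omega
  obtain ⟨f', φ, hf', hφ, hinj⟩ := exists_distinct_missing k (isolate G v) (Finset.Icc 1 k) N M f u₀
    (by simp) ⟨hf, fun u _ => ⟨Finset.filter_subset _ _, fun i hi => (Finset.mem_filter.1 hi).2⟩⟩
    (by
      have h1 : N.card = deg G v := by
        unfold deg
        rw [← Set.ncard_coe_finset]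
        congr 1
        ext u
        simp [N]
      rw [h1, Nat.card_Icc]
      exact hdeg v)
    (fun u hu => by
      have := hM u ((hN u).1 hu)
      have := hdeg u
      omega)
    (fun u hu hne => by
      have := hM u ((hN u).1 hu)
      have := hv u ((hN u).1 hu) hne
      omega)
  let g : Sym2 V → ℕ := fun e => if h : v ∈ e then φ (Sym2.Mem.other h) else f' e
  have hgv : ∀ u, g s(v, u) = φ u := by
    intro u
    have hmem : v ∈ s(v, u) := by simp
    simp only [g, dif_pos hmem]
    congr 1
    exact Sym2.congr_right.1 (Sym2.other_spec hmem)
  have hgv' : ∀ u, g s(u, v) = φ u := fun u => by rw [Sym2.eq_swap, hgv]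
  have hg : ∀ a b, a ≠ v → b ≠ v → g s(a, b) = f' s(a, b) := by
    intro a b ha hb
    have hmem : v ∉ s(a, b) := by simp [ha.symm, hb.symm]
    simp only [g, dif_neg hmem]
  refine ⟨g, ?_, ?_⟩
  · intro a b hab
    by_cases ha : a = v
    · subst ha
      rw [hgv]
      exact (hφ b ((hN b).2 hab)).1
    by_cases hb : b = v
    · subst hb
      rw [hgv']
      exact (hφ a ((hN a).2 hab.symm)).1
    rw [hg a b ha hb]
    exact hf'.1 a b ⟨hab, ha, hb⟩
  · intro a b c hab hac heq
    by_cases ha : a = v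
    · subst ha
      rw [hgv, hgv] at heq
      exact hinj b ((hN b).2 hab) c ((hN c).2 hac) heq
    by_cases hb : b = v
    · by_cases hc : c = v
      · rw [hb, hc]
      · subst hb
        rw [hgv', hg a c ha hc] at heq
        exact absurd heq.symm
          (missingAt_iff.1 (hφ a ((hN a).2 hab.symm)).2 c ⟨hac, ha, hc⟩)
    · by_cases hc : c = v
      · subst hc
        rw [hgv', hg a b ha hb] at heq
        exact absurd heq (missingAt_iff.1 (hφ a ((hN a).2 hac.symm)).2 b ⟨hab, ha, hb⟩)
      · rw [hg a b ha hb, hg a c ha hc] at heq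
        exact hf'.2 a b c ⟨hab, ha, hb⟩ ⟨hac, ha, hc⟩ heq

/-! ### Graphs whose vertices of maximum degree induce a forest -/

/-- A nonempty vertex set in a finite forest contains a vertex with at most one neighbor in it. -/
lemma exists_leaf_of_acyclic [Fintype V] {F : SimpleGraph V} (hF : F.IsAcyclic) {S : Set V}
    (hS : S.Nonempty) :
    ∃ v ∈ S, ∀ a ∈ S, ∀ b ∈ S, F.Adj v a → F.Adj v b → a = b := by
  classical
  obtain ⟨x, hx⟩ := hS
  have hac := hF.induce S
  let C := (F.induce S).connectedComponentMk ⟨x, hx⟩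
  have hT := hac.isTree_connectedComponent C
  have hadj : ∀ {y z : S} (hy : y ∈ C) (h : F.Adj y z), z ∈ C := by
    intro y z hy h
    have h' : (F.induce S).Adj y z := h
    exact (ConnectedComponent.sound h'.symm.reachable).trans hy
  rcases subsingleton_or_nontrivial C with hsub | hnt
  · refine ⟨x, hx, fun a ha b hb hxa hxb => ?_⟩
    have h1 : (⟨x, hx⟩ : S) ∈ C := rfl
    have h2 := hadj (z := ⟨a, ha⟩) h1 hxa
    have h3 := hadj (z := ⟨b, hb⟩) h1 hxb
    have := Subsingleton.elim (⟨⟨a, ha⟩, h2⟩ : C) ⟨⟨b, hb⟩, h3⟩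
    simpa using this
  · obtain ⟨⟨⟨v, hvS⟩, hvC⟩, hv⟩ := hT.exists_vert_degree_one_of_nontrivial
    refine ⟨v, hvS, fun a ha b hb hva hvb => ?_⟩
    have h2 := hadj (z := ⟨a, ha⟩) hvC hva
    have h3 := hadj (z := ⟨b, hb⟩) hvC hvb
    rw [SimpleGraph.degree_eq_one_iff_existsUnique_adj] at hv
    have := hv.unique (y₁ := ⟨⟨a, ha⟩, h2⟩) (y₂ := ⟨⟨b, hb⟩, h3⟩) hva hvb
    simpa using this

/-- Fournier's theorem: if all degrees are at most `k` and the vertices of degree `k` induce a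
subgraph of a forest `F`, then the graph has a proper `k`-edge-coloring. -/
theorem fournier [Fintype V] {F : SimpleGraph V} (hF : F.IsAcyclic) (k : ℕ) :
    ∀ (n : ℕ) (G : SimpleGraph V), G.edgeSet.ncard = n → (∀ x, deg G x ≤ k) →
      (∀ a b, G.Adj a b → deg G a = k → deg G b = k → F.Adj a b) →
      ∃ f, ProperOn G (Finset.Icc 1 k) f := by
  intro n
  induction n using Nat.strong_induction_on with
  | _ n ih =>
    intro G hn hdeg hcore
    by_cases hbot : G = ⊥
    · subst hbot
      exact ⟨fun _ => 0, fun a b h => h.elim, fun a b c h => h.elim⟩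
    obtain ⟨a, b, hab⟩ := SimpleGraph.ne_bot_iff_exists_adj.1 hbot
    have hpos : ∀ {x y}, G.Adj x y → 0 < deg G x := fun {x y} h =>
      (Set.ncard_pos (Set.toFinite _)).2 ⟨y, h⟩
    obtain ⟨v, w, u₀, hvw, hv⟩ : ∃ v w u₀, G.Adj v w ∧
        ∀ u, G.Adj v u → u ≠ u₀ → deg G u < k := by
      by_cases hS : {x | deg G x = k}.Nonempty
      · obtain ⟨v, hvS, hv⟩ := exists_leaf_of_acyclic hF hS
        have hvpos : 0 < deg G v := by
          rw [show deg G v = k from hvS]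
          exact (hpos hab).trans_le (hdeg a)
        obtain ⟨w, hw⟩ := (Set.ncard_pos (Set.toFinite _)).1 hvpos
        by_cases hu : ∃ u₀, G.Adj v u₀ ∧ deg G u₀ = k
        · obtain ⟨u₀, hu₀, hu₀k⟩ := hu
          refine ⟨v, w, u₀, hw, fun u hvu hne => lt_of_le_of_ne (hdeg u) fun huk => hne ?_⟩
          exact hv u huk u₀ hu₀k (hcore v u hvu hvS huk) (hcore v u₀ hu₀ hvS hu₀k)
        · exact ⟨v, w, v, hw, fun u hvu _ => lt_of_le_of_ne (hdeg u) fun huk => hu ⟨u, hvu, huk⟩⟩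
      · exact ⟨a, b, a, hab, fun u _ _ => lt_of_le_of_ne (hdeg u) fun huk => hS ⟨u, huk⟩⟩
    have hle : isolate G v ≤ G := fun _ _ h => h.1
    have hdle : ∀ x, deg (isolate G v) x ≤ deg G x := fun x =>
      Set.ncard_le_ncard (fun _ h => h.1) (Set.toFinite _)
    have hlt : (isolate G v).edgeSet.ncard < n := by
      rw [← hn]
      refine Set.ncard_lt_ncard ?_ (Set.toFinite _)
      refine ⟨SimpleGraph.edgeSet_mono hle, fun hsub => ?_⟩
      have : s(v, w) ∈ (isolate G v).edgeSet := hsub hvw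
      exact this.2.1 rfl
    obtain ⟨f, hf⟩ := ih _ hlt (isolate G v) rfl (fun x => (hdle x).trans (hdeg x))
      (fun x y hxy hx hy => hcore x y hxy.1
        (le_antisymm (hdeg x) (hx ▸ hdle x)) (le_antisymm (hdeg y) (hy ▸ hdle y)))
    exact extend_to_vertex hdeg hv hf

/-! ### Application to Halin graphs -/

lemma deg_le_maxDeg [Fintype V] (G : SimpleGraph V) (x : V) : deg G x ≤ maxDeg G :=
  le_ciSup (f := fun x => deg G x) (Set.finite_range _).bddAbove x

/-- The edges at a vertex get distinct colors, so degrees bound the number of colors. -/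
lemma IsProperEdgeColoring.deg_le {G : SimpleGraph V} {t : ℕ} {f : Sym2 V → ℕ}
    (h : IsProperEdgeColoring G t f) (x : V) : deg G x ≤ t := by
  have h1 : deg G x ≤ (↑(Finset.Icc 1 t) : Set ℕ).ncard := by
    refine Set.ncard_le_ncard_of_injOn (fun b => f s(x, b)) ?_ ?_ (Finset.finite_toSet _)
    · intro b hb
      exact h.1 s(x, b) hb
    · intro b hb c hc heq
      by_contra hne
      exact h.2 s(x, b) hb s(x, c) hc (fun he => hne (Sym2.congr_right.1 he))
        ⟨x, by simp, by simp⟩ heq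
  rwa [Set.ncard_coe_finset, Nat.card_Icc, Nat.add_sub_cancel] at h1

/-- In a Halin graph every edge outside the tree `T` lies on the cycle through the leaves of `T`,
so its ends are leaves, each with one tree edge and two cycle edges. -/
lemma deg_le_three_of_not_tree [Fintype V] {G T : SimpleGraph V} {x₀ : V} {c : G.Walk x₀ x₀}
    (hc : c.IsCycle) (he : ∀ e : Sym2 V, e ∈ c.edges ↔ e ∈ G.edgeSet \ T.edgeSet)
    (hs : ∀ u : V, u ∈ c.support ↔ deg T u = 1) {a b : V} (hab : G.Adj a b)
    (hT : ¬ T.Adj a b) : deg G a ≤ 3 := by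
  have hac : a ∈ c.support := c.fst_mem_support_of_mem_edges ((he s(a, b)).2 ⟨hab, hT⟩)
  have h1 : deg T a = 1 := (hs a).1 hac
  have h2 := hc.ncard_neighborSet_toSubgraph_eq_two hac
  have hsub : G.neighborSet a ⊆ T.neighborSet a ∪ c.toSubgraph.neighborSet a := by
    intro y hy
    by_cases hTy : T.Adj a y
    · exact Or.inl hTy
    · refine Or.inr ?_
      have := (he s(a, y)).2 ⟨hy, hTy⟩
      rw [← Walk.mem_edges_toSubgraph] at this
      exact this
  calc deg G a ≤ (T.neighborSet a ∪ c.toSubgraph.neighborSet a).ncard :=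
        Set.ncard_le_ncard hsub (Set.toFinite _)
    _ ≤ (T.neighborSet a).ncard + (c.toSubgraph.neighborSet a).ncard := Set.ncard_union_le _ _
    _ = 3 := by rw [h2, show (T.neighborSet a).ncard = 1 from h1]

/-- Every subgraph `H` of a Halin graph with `Δ(H) ≥ 4` is Class 1. -/
theorem halin_subgraph_class_one
    {V : Type*} [Fintype V] (G : SimpleGraph V) (hH : IsHalin G) :
    ∀ H : SimpleGraph V, H ≤ G → 4 ≤ maxDeg H → chromIdx H = maxDeg H := by
  intro H hHG h4
  obtain ⟨-, -, T, -, hT, -, x₀, c, hc, he, hs⟩ := hH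
  have hdeg : ∀ x, deg H x ≤ deg G x := fun x =>
    Set.ncard_le_ncard (fun _ h => hHG h) (Set.toFinite _)
  obtain ⟨f, hf⟩ := fournier hT.isAcyclic (maxDeg H) _ H rfl (deg_le_maxDeg H) (by
    intro a b hab ha _
    by_contra hTab
    have h1 := deg_le_three_of_not_tree hc he hs (hHG hab) hTab
    have h2 := hdeg a
    omega)
  have hmem : maxDeg H ∈ {t | ∃ f, IsProperEdgeColoring H t f} := ⟨f, hf.isProperEdgeColoring⟩
  refine le_antisymm (Nat.sInf_le hmem) (le_csInf ⟨_, hmem⟩ ?_)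
  rintro t ⟨g, hg⟩
  have : Nonempty V := ⟨x₀⟩
  exact ciSup_le fun x => hg.deg_le x

end EdgeTrans
end

section
/- If W_n is a wheel graph on n+1 vertices with n ≥ 5 (a cycle v_1 v_2 … v_n v_1 together with a hub v_0 adjacent to every v_i), then W_n belongs to A(3); that is, every subgraph H of W_n with Δ(H) ≤ 3 has a proper 3-edge-coloring. -/
/-!
A subgraph of `W_n` of maximum degree at most 3 contains at most three spokes, so it is enough to
3-edge-color the rim together with exactly three spokes. These cut the rim into three arcs with
`l₁ + 1`, `l₂ + 1`, `l₃ + 1` edges, where `l₁ + l₂ + l₃ + 3 = n`. Give the three spokes three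
distinct colors; at the rim end of each spoke, the two rim edges must then receive the two remaining
colors, in either order.

An arc can be properly colored with prescribed colors on its first and last edges unless it has one
edge and the two colors differ, or two edges and the two colors agree (`exists_arc_coloring`). Hence
only the lengths up to `min l 2` matter, and a finite check (`exists_arc_ends`) shows that suitable
end colors exist as soon as `l₁ + l₂ + l₃ ≥ 2`, that is, as soon as `n ≥ 5`. For `n = 4` the
statement fails: the rim with three spokes has five vertices and seven edges, but a color class has
at most two edges.
-/

open SimpleGraph Set

namespace EdgeTrans

universe u v

variable {V : Type*} {W : Type*}

/-! ### Coloring a rim with three spokes -/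

/-- A path with `l + 1` edges can be properly 3-edge-colored with prescribed colors `x`, `y` on its
first and last edges, apart from the obvious obstructions for `l ≤ 1`. -/
lemma exists_arc_coloring (l : ℕ) (x y : Fin 3) (h0 : l = 0 → x = y) (h1 : l = 1 → x ≠ y) :
    ∃ g : ℕ → Fin 3, g 0 = x ∧ g l = y ∧ ∀ i < l, g i ≠ g (i + 1) := by
  induction l generalizing x with
  | zero => exact ⟨fun _ => x, rfl, h0 rfl, by simp⟩
  | succ l ih =>
    -- The color `z` of the second edge must avoid `x`, and be compatible with `y` on the rest.
    obtain ⟨z, hxz, hz0, hz1⟩ : ∃ z : Fin 3, x ≠ z ∧ (l = 0 → z = y) ∧ (l = 1 → z ≠ y) := by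
      by_cases hl : l = 0
      · exact ⟨y, h1 (by omega), fun _ => rfl, by omega⟩
      · obtain ⟨z, hz, hz'⟩ : ∃ z : Fin 3, x ≠ z ∧ z ≠ y := by
          clear ih h0 h1
          revert x y; decide
        exact ⟨z, hz, fun h => absurd h hl, fun _ => hz'⟩
    obtain ⟨g, hg0, hgl, hg⟩ := ih z hz0 hz1
    refine ⟨fun i => if i = 0 then x else g (i - 1), by simp, by simpa using hgl, ?_⟩
    intro i hi
    rcases i with _ | i
    · simpa [hg0] using hxz
    · simpa using hg i (by omega)

set_option synthInstance.maxSize 2000 in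
/-- The end colors of the three arcs, when the spoke between the first and second arcs has color
`0`, the one between the second and third has color `1`, and the one between the third and first
has color `2`. The numbers `a`, `b`, `c` are the numbers of edges minus one, truncated at `2`. -/
lemma exists_arc_ends : ∀ a b c : Fin 3, 2 ≤ a.val + b.val + c.val →
    ∃ x₁ y₁ : Fin 3, (a.val = 0 → x₁ = y₁) ∧ (a.val = 1 → x₁ ≠ y₁) ∧ x₁ ≠ 2 ∧ y₁ ≠ 0 ∧
    ∃ x₂ y₂ : Fin 3, (b.val = 0 → x₂ = y₂) ∧ (b.val = 1 → x₂ ≠ y₂) ∧ x₂ ≠ 0 ∧ y₂ ≠ 1 ∧ y₁ ≠ x₂ ∧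
    ∃ x₃ y₃ : Fin 3, (c.val = 0 → x₃ = y₃) ∧ (c.val = 1 → x₃ ≠ y₃) ∧ x₃ ≠ 1 ∧ y₃ ≠ 2 ∧
      y₂ ≠ x₃ ∧ y₃ ≠ x₁ := by
  decide

/-- A coloring `G` of the rim edges `{i, i + 1}`, `0 ≤ i < n`, of a rim with vertices
`0, …, n - 1` that is compatible with spokes at `0`, `p`, `q` of colors `2`, `0`, `1`. -/
lemma exists_rim_coloring (n p q : ℕ) (hn : 5 ≤ n) (hp : 0 < p) (hpq : p < q) (hq : q < n) :
    ∃ G : ℕ → Fin 3, (∀ i, i + 1 < n → G i ≠ G (i + 1)) ∧ G (n - 1) ≠ G 0 ∧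
      G (n - 1) ≠ 2 ∧ G 0 ≠ 2 ∧ G (p - 1) ≠ 0 ∧ G p ≠ 0 ∧ G (q - 1) ≠ 1 ∧ G q ≠ 1 := by
  obtain ⟨x₁, y₁, ha0, ha1, hx₁, hy₁, x₂, y₂, hb0, hb1, hx₂, hy₂, h12, x₃, y₃, hc0, hc1, hx₃, hy₃,
    h23, h31⟩ := exists_arc_ends ⟨min (p - 1) 2, by omega⟩ ⟨min (q - p - 1) 2, by omega⟩
      ⟨min (n - q - 1) 2, by omega⟩ (by simp only; omega)
  simp only at ha0 ha1 hb0 hb1 hc0 hc1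
  obtain ⟨g₁, s₁, e₁, g₁h⟩ := exists_arc_coloring (p - 1) x₁ y₁
    (fun h => ha0 (by omega)) (fun h => ha1 (by omega))
  obtain ⟨g₂, s₂, e₂, g₂h⟩ := exists_arc_coloring (q - p - 1) x₂ y₂
    (fun h => hb0 (by omega)) (fun h => hb1 (by omega))
  obtain ⟨g₃, s₃, e₃, g₃h⟩ := exists_arc_coloring (n - q - 1) x₃ y₃
    (fun h => hc0 (by omega)) (fun h => hc1 (by omega))
  set G : ℕ → Fin 3 := fun i => if i < p then g₁ i else if i < q then g₂ (i - p) else g₃ (i - q)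
    with hG
  have G1 : ∀ i < p, G i = g₁ i := fun i hi => by simp [hG, hi]
  have G2 : ∀ i, p ≤ i → i < q → G i = g₂ (i - p) := fun i h h' => by
    simp [hG, h', not_lt.2 h]
  have G3 : ∀ i, q ≤ i → G i = g₃ (i - q) := fun i h => by
    simp [hG, not_lt.2 h, not_lt.2 (hpq.le.trans h)]
  have E0 : G 0 = x₁ := by rw [G1 0 hp, s₁]
  have Ep' : G (p - 1) = y₁ := by rw [G1 _ (by omega), e₁]
  have Ep : G p = x₂ := by rw [G2 p le_rfl hpq, Nat.sub_self, s₂]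
  have Eq0' : G (q - 1) = y₂ := by
    rw [G2 _ (by omega) (by omega), show q - 1 - p = q - p - 1 by omega, e₂]
  have Eq0 : G q = x₃ := by rw [G3 q le_rfl, Nat.sub_self, s₃]
  have En' : G (n - 1) = y₃ := by
    rw [G3 _ (by omega), show n - 1 - q = n - q - 1 by omega, e₃]
  refine ⟨G, ?_, by rwa [En', E0], by rwa [En'], by rwa [E0], by rwa [Ep'], by rwa [Ep],
    by rwa [Eq0'], by rwa [Eq0]⟩
  intro i hi
  rcases lt_trichotomy (i + 1) p with h | h | h
  · rw [G1 i (by omega), G1 _ h]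
    exact g₁h i (by omega)
  · rw [h, Ep, show i = p - 1 by omega, Ep']
    exact h12
  rcases lt_trichotomy (i + 1) q with h' | h' | h'
  · rw [G2 i (by omega) (by omega), G2 _ (by omega) h', show i + 1 - p = i - p + 1 by omega]
    exact g₂h _ (by omega)
  · rw [h', Eq0, show i = q - 1 by omega, Eq0']
    exact h23
  · rw [G3 i (by omega), G3 _ (by omega), show i + 1 - q = i - q + 1 by omega]
    exact g₃h _ (by omega)

lemma val_add_one_eq (n : ℕ) (hn : 2 ≤ n) (z : ZMod n) :
    (z + 1).val = if z.val + 1 = n then 0 else z.val + 1 := by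
  have : Fact (1 < n) := ⟨hn⟩
  have : NeZero n := ⟨by omega⟩
  have hz := ZMod.val_lt z
  rw [ZMod.val_add, ZMod.val_one]
  split_ifs with h
  · rw [h, Nat.mod_self]
  · exact Nat.mod_eq_of_lt (by omega)

/-- Colors `c i` for the rim edges `{i, i + 1}` and `s i` for the spokes at the vertices of a
three-element set `S`, forming a proper coloring. -/
lemma exists_wheel_coloring (n : ℕ) (hn : 5 ≤ n) (S : Finset (ZMod n)) (hS : S.card = 3) :
    ∃ c s : ZMod n → Fin 3, (∀ i, c i ≠ c (i + 1)) ∧ (∀ i ∈ S, s i ≠ c i) ∧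
      (∀ i, i + 1 ∈ S → s (i + 1) ≠ c i) ∧ InjOn s S := by
  have : NeZero n := ⟨by omega⟩
  obtain ⟨r, u, w, hru, hrw, huw, rfl⟩ := Finset.card_eq_three.1 hS
  -- Distances are measured along the rim from `r`; the spoke at `u` may be taken to come first.
  wlog h : (u - r).val < (w - r).val generalizing u w
  · have hne : (u - r).val ≠ (w - r).val := fun h' =>
      huw (sub_left_injective (ZMod.val_injective n h'))
    have := this w u hrw hru huw.symm (by rwa [Finset.pair_comm]) (by omega)
    rwa [Finset.pair_comm] at this
  have hp : 0 < (u - r).val := by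
    rw [Nat.pos_iff_ne_zero, Ne, ZMod.val_eq_zero, sub_eq_zero]
    exact hru.symm
  obtain ⟨G, hG, hcyc, hn2, h02, hp', hp0, hq', hq0⟩ :=
    exists_rim_coloring n _ _ hn hp h (ZMod.val_lt (w - r))
  have step : ∀ i : ZMod n, (i + 1 - r).val =
      if (i - r).val + 1 = n then 0 else (i - r).val + 1 := fun i => by
    rw [← val_add_one_eq n (by omega), sub_add_eq_add_sub]
  refine ⟨fun i => G (i - r).val, fun i => if i = r then 2 else if i = u then 0 else 1,
    ?_, ?_, ?_, ?_⟩
  · intro i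
    have hi := ZMod.val_lt (i - r)
    simp only [step]
    split_ifs with h'
    · rwa [show (i - r).val = n - 1 by omega]
    · exact hG _ (by omega)
  · intro i hi
    simp only [Finset.mem_insert, Finset.mem_singleton] at hi
    rcases hi with rfl | rfl | rfl
    · simpa using h02.symm
    · simpa [hru.symm] using hp0.symm
    · simpa [hrw.symm, huw.symm] using hq0.symm
  · intro i hi
    have st := step i
    have hlt := ZMod.val_lt (i - r)
    simp only [Finset.mem_insert, Finset.mem_singleton] at hi
    beta_reduce
    rcases hi with e | e | e <;> rw [e] at st
    · simp only [sub_self, ZMod.val_zero] at st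
      rw [show (i - r).val = n - 1 by split_ifs at st; omega]
      simpa [e] using hn2.symm
    · rw [show (i - r).val = (u - r).val - 1 by split_ifs at st <;> omega]
      simpa [e, hru.symm] using hp'.symm
    · rw [show (i - r).val = (w - r).val - 1 by split_ifs at st <;> omega]
      simpa [e, hrw.symm, huw.symm] using hq'.symm
  · intro i hi j hj hij
    simp only [Finset.coe_insert, Finset.coe_singleton, Set.mem_insert_iff,
      Set.mem_singleton_iff] at hi hj
    rcases hi with rfl | rfl | rfl <;> rcases hj with rfl | rfl | rfl <;>
      simp_all [eq_comm]

/-! ### Subgraphs of the wheel -/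

lemma ncard_spokes_le (n : ℕ) [NeZero n] (H : SimpleGraph (Option (ZMod n)))
    (hd : maxDeg H ≤ 3) : {i : ZMod n | H.Adj none (some i)}.ncard ≤ 3 := by
  have h1 : deg H none ≤ 3 := (le_ciSup (Set.finite_range (deg H)).bddAbove none).trans hd
  refine le_trans ?_ h1
  rw [← Set.ncard_image_of_injective _ (Option.some_injective (ZMod n))]
  refine Set.ncard_le_ncard ?_ (Set.toFinite _)
  rintro _ ⟨i, hi, rfl⟩
  exact hi

/-- The wheel graph `W_n` with `n ≥ 5` belongs to `𝒜(3)`: every subgraph of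
`W_n` with maximum degree at most 3 has a proper 3-edge-coloring. -/
theorem wheelGraph_memA_three (n : ℕ) (hn : 5 ≤ n) : MemA 3 (wheelGraph n) := by
  intro H hH hd
  have : NeZero n := ⟨by omega⟩
  classical
  obtain ⟨S, hsub, hS⟩ : ∃ S : Finset (ZMod n),
      {i : ZMod n | H.Adj none (some i)}.toFinset ⊆ S ∧ S.card = 3 := by
    refine Finset.exists_superset_card_eq ?_ ?_
    · rw [← Set.ncard_eq_toFinset_card']
      exact ncard_spokes_le n H hd
    · rw [ZMod.card]; omega
  have hS' : ∀ i, H.Adj none (some i) → i ∈ S := fun i hi => hsub (by simpa using hi)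
  obtain ⟨c, s, hc, hs, hs', hinj⟩ := exists_wheel_coloring n hn S hS
  have h2 : ∀ i j : ZMod n, j = i + 1 → i ≠ j + 1 := by
    rintro i j rfl h
    have h1 := val_add_one_eq n (by omega) i
    have h2 := val_add_one_eq n (by omega) (i + 1)
    rw [← h, h1] at h2
    have := ZMod.val_lt i
    split_ifs at h2 <;> omega
  -- The value `0` occurs only on pairs that are not edges of the wheel.
  let f₀ : Option (ZMod n) → Option (ZMod n) → Fin 3
    | none, none => 0
    | none, some i => s i
    | some i, none => s i
    | some i, some j => if j = i + 1 then c i else if i = j + 1 then c j else 0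
  have hsymm : ∀ a b, f₀ a b = f₀ b a := by
    rintro (_ | i) (_ | j) <;> try rfl
    have := h2 i j
    simp only [f₀]
    split_ifs with h h' h'
    · exact absurd h' (this h)
    all_goals rfl
  let f : Sym2 (Option (ZMod n)) → Fin 3 := Sym2.lift ⟨f₀, hsymm⟩
  have hrim : ∀ i j : ZMod n, H.Adj (some i) (some j) → j = i + 1 ∨ i = j + 1 := by
    intro i j hij
    have := hH hij
    simpa [wheelGraph, eq_comm] using this.2
  have hA : ∀ i, f₀ (some i) (some (i + 1)) = c i := fun i => if_pos rfl
  have hB : ∀ i, f₀ (some (i + 1)) (some i) = c i := fun i => (hsymm (some (i + 1)) (some i)).trans (hA i)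
  have hmix : ∀ i k, H.Adj (some i) none → H.Adj (some i) (some k) →
      f₀ (some i) none ≠ f₀ (some i) (some k) := by
    intro i k hi hk
    have hi := hS' i hi.symm
    rcases hrim i k hk with rfl | rfl
    · rw [hA]
      exact hs i hi
    · rw [hB]
      exact hs' k hi
  have key : ∀ x a b, H.Adj x a → H.Adj x b → a ≠ b → f₀ x a ≠ f₀ x b := by
    rintro (_ | i) (_ | j) (_ | k) hj hk hne
    · exact absurd hj H.irrefl
    · exact absurd hj H.irrefl
    · exact absurd hk H.irrefl
    · intro h
      exact hne (congrArg some (hinj (hS' j hj) (hS' k hk) h))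
    · exact absurd rfl hne
    · exact hmix i k hj hk
    · exact (hmix i j hk hj).symm
    · rcases hrim i j hj with rfl | hij <;> rcases hrim i k hk with rfl | hik
      · exact absurd rfl hne
      · subst hik
        rw [hA, hB]
        exact (hc k).symm
      · subst hij
        rw [hA, hB]
        exact hc j
      · exact absurd (congrArg some (add_right_cancel (hij.symm.trans hik))) hne
  refine ⟨fun e => (f e).val + 1, fun e _ => ?_, ?_⟩
  · have := (f e).isLt
    simp only [Finset.mem_Icc]; omega
  · rintro e₁ he₁ e₂ he₂ hne ⟨x, hx₁, hx₂⟩ h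
    obtain ⟨a, rfl⟩ := hx₁
    obtain ⟨b, rfl⟩ := hx₂
    exact key x a b he₁ he₂ (fun h => hne (by rw [h])) (Fin.ext (Nat.succ.inj h))

end EdgeTrans
end

section
/- For every graph or multigraph G there exists a Class 1 graph F_G with χ'(F_G) = χ'(G) such that χ'_trans(G) ≤ χ'_trans(F_G). Consequently, there is an absolute constant C with χ'_trans(G) ≤ C for every graph or multigraph G if and only if there is such a constant for all Class 1 graphs. -/
/-!
Put `t = χ'(G)`. The Class 1 graph `F_G` is obtained from the multigraph `G` by replacing every edge
`e = uv` by a gadget: a copy of `K_{t,t}` from which one edge `xy` is deleted, together with the two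
edges `ux` and `yv` (`gadget`). Every gadget vertex has degree `t` and the original vertices keep
their degrees, so `Δ(F_G) = t` as soon as `G` has an edge.

A proper `t`-edge-coloring `f` of `G` extends to `F_G` (`extend_proper`): color the gadget of `e` by
the cyclic Latin square shifted so that its `(0,0)` entry, the deleted edge, is `f e`, and give the
color `f e` to `ux` and `yv`. Hence `χ'(F_G) = Δ(F_G) = t`.

Conversely, in every proper `t`-edge-coloring of `F_G` the edges `ux` and `yv` have the same color
(`latin_corner`): if `ux` has color `p` and `yv` does not, then all `t` vertices on the side of `y`
are matched by color `p`, inside the gadget, to vertices on the side of `x` other than `x` itself,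
of which there are only `t - 1`. Reading off the color of `ux` therefore yields a proper
`t`-edge-coloring of `G` (`project_proper`). Projecting does not increase the number of differing
color classes and undoes the extension, so a recoloring sequence between the extensions of `f` and
`g` projects to one between `f` and `g`. Thus `χ'_trans(G) ≤ χ'_trans(F_G)`.

A bound for Class 1 graphs therefore gives one for multigraphs. For the other implication, a simple
graph is a multigraph on its own edge set, with the same transformation index (`transIdx_le_ofSimple`
is the inequality used). As the indices are infima over `ℕ`, both arguments also need the sets in
question to be nonempty, which holds because any two `t`-edge-colorings differ by at most `t` color
classes.
-/


open SimpleGraph Set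

namespace EdgeTrans

universe u v

variable {V : Type*} {W : Type*}

/-! ### Attained indices and degree bounds -/

lemma isProper_iff (G : SimpleGraph V) (t : ℕ) (c : Sym2 V → ℕ) :
    IsProperEdgeColoring G t c ↔
      (∀ x y, G.Adj x y → c s(x, y) ∈ Finset.Icc 1 t) ∧
      ∀ x y z, G.Adj x y → G.Adj x z → c s(x, y) = c s(x, z) → y = z := by
  constructor
  · rintro ⟨h1, h2⟩
    refine ⟨fun x y h => h1 _ h, fun x y z hy hz h => ?_⟩
    by_contra hne
    refine h2 s(x, y) hy s(x, z) hz (fun he => hne ?_) ⟨x, by simp, by simp⟩ h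
    exact Sym2.congr_right.1 he
  · rintro ⟨h1, h2⟩
    refine ⟨fun e => ?_, ?_⟩
    · induction e using Sym2.ind with
      | _ x y => exact h1 x y
    · rintro e₁ he₁ e₂ he₂ hne ⟨x, ⟨y, rfl⟩, ⟨z, rfl⟩⟩ h
      exact hne (by rw [h2 x y z he₁ he₂ h])

lemma transIdx_set_nonempty (G : SimpleGraph V) :
    {n | 2 ≤ n ∧ ∀ f g, IsProperEdgeColoring G (chromIdx G) f →
      IsProperEdgeColoring G (chromIdx G) g → NEquiv G (chromIdx G) n f g}.Nonempty := by
  refine ⟨max 2 (chromIdx G), le_max_left _ _, fun f g hf hg =>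
    ⟨1, fun i => if i = 0 then f else g, le_rfl, by simp, by simp, ?_, ?_⟩⟩
  · intro i _
    dsimp only
    split_ifs <;> assumption
  · intro i hi
    obtain rfl : i = 0 := by omega
    refine le_trans ?_ (le_max_right _ _)
    have hsub : {j : ℕ | colorClass G f j ≠ colorClass G g j} ⊆
        (Finset.Icc 1 (chromIdx G) : Set ℕ) := by
      intro j hj
      by_contra hj'
      refine hj ?_
      ext e
      refine ⟨fun h => absurd (h.2 ▸ hf.1 e h.1) hj', fun h => absurd (h.2 ▸ hg.1 e h.1) hj'⟩
    have := Set.ncard_le_ncard hsub (Finset.finite_toSet _)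
    rw [Set.ncard_coe_finset, Nat.card_Icc] at this
    simpa [DifferAtMost] using this

lemma mTransIdx_set_nonempty {α β : Type*} (G : Multigraph α β) :
    {n | 2 ≤ n ∧ ∀ f g, G.IsProper G.mChromIdx f → G.IsProper G.mChromIdx g →
      G.MNEquiv G.mChromIdx n f g}.Nonempty := by
  refine ⟨max 2 G.mChromIdx, le_max_left _ _, fun f g hf hg =>
    ⟨1, fun i => if i = 0 then f else g, le_rfl, by simp, by simp, ?_, ?_⟩⟩
  · intro i _
    dsimp only
    split_ifs <;> assumption
  · intro i hi
    obtain rfl : i = 0 := by omega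
    refine le_trans ?_ (le_max_right _ _)
    have hsub : {j : ℕ | Multigraph.mColorClass f j ≠ Multigraph.mColorClass g j} ⊆
        (Finset.Icc 1 G.mChromIdx : Set ℕ) := by
      intro j hj
      by_contra hj'
      refine hj ?_
      ext e
      exact ⟨fun h => absurd (h ▸ hf.1 e) hj', fun h => absurd (h ▸ hg.1 e) hj'⟩
    have := Set.ncard_le_ncard hsub (Finset.finite_toSet _)
    rw [Set.ncard_coe_finset, Nat.card_Icc] at this
    simpa using this

/-- A finite multigraph has an edge-coloring, so its chromatic index is attained. -/
lemma exists_isProper {α β : Type*} [Finite β] (G : Multigraph α β) :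
    ∃ f, G.IsProper G.mChromIdx f := by
  refine Nat.sInf_mem (s := {t | ∃ f, G.IsProper t f}) ?_
  obtain ⟨n, ⟨φ⟩⟩ := Finite.exists_equiv_fin β
  refine ⟨n, fun e => (φ e : ℕ) + 1, fun e => ?_, fun e₁ e₂ hne _ h => hne ?_⟩
  · have := (φ e).2
    simp only [Finset.mem_Icc]
    omega
  · exact φ.injective (Fin.ext (by simpa using h))

lemma maxDeg_le {G : SimpleGraph V} {t : ℕ} {c : Sym2 V → ℕ}
    (hc : IsProperEdgeColoring G t c) : maxDeg G ≤ t := by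
  rw [isProper_iff] at hc
  refine ciSup_le' fun x => ?_
  have h := Set.ncard_le_ncard_of_injOn (s := G.neighborSet x)
    (t := (Finset.Icc 1 t : Set ℕ)) (fun y => c s(x, y))
    (fun y hy => hc.1 x y hy) (fun y hy z hz h => hc.2 x y z hy hz h) (Finset.finite_toSet _)
  rw [Set.ncard_coe_finset, Nat.card_Icc] at h
  simpa [deg] using h

/-! ### Simple graphs as multigraphs -/

/-- A simple graph, regarded as a multigraph on its own set of edges. -/
def ofSimple (F : SimpleGraph V) : Multigraph V F.edgeSet where
  ends e := e.1
  not_isDiag e := F.not_isDiag_of_mem_edgeSet e.2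

lemma ofSimple_isProper (F : SimpleGraph V) (t : ℕ) (c : Sym2 V → ℕ) :
    (ofSimple F).IsProper t (fun e => c e.1) ↔ IsProperEdgeColoring F t c := by
  constructor
  · rintro ⟨h1, h2⟩
    exact ⟨fun e he => h1 ⟨e, he⟩, fun e₁ h₁ e₂ h₂ hne hx =>
      h2 ⟨e₁, h₁⟩ ⟨e₂, h₂⟩ (fun h => hne (congrArg Subtype.val h)) hx⟩
  · rintro ⟨h1, h2⟩
    exact ⟨fun e => h1 e.1 e.2, fun e₁ e₂ hne hx =>
      h2 e₁.1 e₁.2 e₂.1 e₂.2 (fun h => hne (Subtype.ext h)) hx⟩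

open Classical in
/-- Extension of an edge coloring `c` to all unordered pairs, by the values of `d` off the edges. -/
noncomputable def fill (F : SimpleGraph V) (c : F.edgeSet → ℕ) (d : Sym2 V → ℕ) : Sym2 V → ℕ :=
  fun e => if h : e ∈ F.edgeSet then c ⟨e, h⟩ else d e

lemma fill_restrict (F : SimpleGraph V) (c : F.edgeSet → ℕ) (d : Sym2 V → ℕ) :
    (fun e : F.edgeSet => fill F c d e.1) = c := by
  funext e
  simp [fill]

lemma ofSimple_chromIdx (F : SimpleGraph V) : (ofSimple F).mChromIdx = chromIdx F := by
  unfold Multigraph.mChromIdx chromIdx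
  congr 1
  ext t
  constructor
  · rintro ⟨f, hf⟩
    refine ⟨fill F f (fun _ => 0), ?_⟩
    rwa [← ofSimple_isProper, fill_restrict]
  · rintro ⟨f, hf⟩
    exact ⟨_, (ofSimple_isProper F t f).2 hf⟩

lemma colorClass_eq_image (F : SimpleGraph V) (c : Sym2 V → ℕ) (j : ℕ) :
    colorClass F c j =
      Subtype.val '' Multigraph.mColorClass (fun e : F.edgeSet => c e.1) j := by
  ext e
  simp [colorClass, Multigraph.mColorClass, and_comm]

lemma transIdx_le_ofSimple (F : SimpleGraph V) : transIdx F ≤ (ofSimple F).mTransIdx := by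
  have hmem := Nat.sInf_mem (mTransIdx_set_nonempty (ofSimple F))
  change (ofSimple F).mTransIdx ∈ _ at hmem
  obtain ⟨h2, h⟩ := hmem
  rw [ofSimple_chromIdx] at h
  refine Nat.sInf_le ⟨h2, fun f g hf hg => ?_⟩
  obtain ⟨k, H, hk, h0, hk', hH, hd⟩ :=
    h _ _ ((ofSimple_isProper F _ f).2 hf) ((ofSimple_isProper F _ g).2 hg)
  -- Off the edges the colorings carry arbitrary values: those of `f`, except at the last step.
  let S : ℕ → Sym2 V → ℕ := fun i => fill F (H i) (if i = k then g else f)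
  have hS : ∀ i, (fun e : F.edgeSet => S i e.1) = H i := fun i => fill_restrict F _ _
  refine ⟨k, S, hk, ?_, ?_, ?_, ?_⟩
  · funext e
    have : (0 : ℕ) ≠ k := by omega
    simp only [S, fill, h0, if_neg this]
    split_ifs <;> rfl
  · funext e
    simp only [S, fill, hk', if_true]
    split_ifs <;> rfl
  · intro i hi
    rw [← ofSimple_isProper, hS]
    exact hH i hi
  · intro i hi
    unfold DifferAtMost
    simp only [colorClass_eq_image, hS]
    have := hd i hi
    simpa only [Multigraph.MDifferAtMost, ne_eq,
      Set.image_eq_image Subtype.val_injective] using this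

/-! ### The gadget graph -/

section Gadget

variable {α β : Type*}

/-- Adjacency in the gadget graph. The gadget vertex `(e, s, i)` is the `i`-th vertex on side `s` of
the copy of `K_{n+1,n+1}` belonging to the edge `e`; the edge joining the two vertices of index `0`
is deleted, and `(e, s, 0)` is joined to the end `p e s` of `e`. -/
def gAdj (p : β → Bool → α) (n : ℕ) :
    α ⊕ (β × Bool × Fin (n + 1)) → α ⊕ (β × Bool × Fin (n + 1)) → Prop
  | .inl _, .inl _ => False
  | .inl a, .inr (e, s, i) => i = 0 ∧ a = p e s
  | .inr (e, s, i), .inl a => i = 0 ∧ a = p e s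
  | .inr (e, s, i), .inr (e', s', j) => e = e' ∧ s ≠ s' ∧ ¬ (i = 0 ∧ j = 0)

/-- The graph `F_G` for `t = n + 1`, where `p e false` and `p e true` are the ends of the edge
`e`. -/
def gadget (p : β → Bool → α) (n : ℕ) : SimpleGraph (α ⊕ (β × Bool × Fin (n + 1))) where
  Adj := gAdj p n
  symm := ⟨by
    rintro (a | ⟨e, s, i⟩) (b | ⟨e', s', j⟩) h
    · exact h
    · exact h
    · exact h
    · exact ⟨h.1.symm, h.2.1.symm, fun hh => h.2.2 hh.symm⟩⟩
  loopless := ⟨by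
    rintro (a | ⟨e, s, i⟩) h
    · exact h
    · exact h.2.1 rfl⟩

open Classical in
/-- The extension of `f` to the gadget graph, as a function of two vertices: the edges at the ends
of `e` get the color `f e`, and the edge between the vertices of index `i` and `j` in the gadget of
`e` gets the entry `(i, j)` of a cyclic Latin square with entry `f e` at `(0, 0)`. -/
noncomputable def extFun (n : ℕ) (f : β → ℕ) :
    α ⊕ (β × Bool × Fin (n + 1)) → α ⊕ (β × Bool × Fin (n + 1)) → ℕ
  | .inl _, .inl _ => 0
  | .inl _, .inr (e, _, _) => f e
  | .inr (e, _, _), .inl _ => f e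
  | .inr (e, _, i), .inr (e', _, j) =>
    if e = e' then ((i : ℕ) + j + (f e - 1)) % (n + 1) + 1 else 0

lemma extFun_comm (n : ℕ) (f : β → ℕ) (x y : α ⊕ (β × Bool × Fin (n + 1))) :
    extFun n f x y = extFun n f y x := by
  rcases x with a | ⟨e, s, i⟩ <;> rcases y with b | ⟨e', s', j⟩ <;> try rfl
  by_cases h : e = e'
  · subst h
    simp [extFun, Nat.add_comm (i : ℕ) j]
  · simp [extFun, h, Ne.symm h]

/-- The extension of `f` to an edge coloring of the gadget graph. -/
noncomputable def extend (n : ℕ) (f : β → ℕ) : Sym2 (α ⊕ (β × Bool × Fin (n + 1))) → ℕ :=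
  Sym2.lift ⟨extFun n f, extFun_comm n f⟩

/-- The edge coloring of the multigraph read off from one of the gadget graph: `e` gets the color of
the edge joining `p e false` to the gadget of `e`. -/
def project (p : β → Bool → α) (n : ℕ) (c : Sym2 (α ⊕ (β × Bool × Fin (n + 1))) → ℕ) : β → ℕ :=
  fun e => c s(.inl (p e false), .inr (e, false, 0))

lemma project_extend (p : β → Bool → α) (n : ℕ) (f : β → ℕ) :
    project p n (extend n f) = f := rfl

lemma latin_cancel {n : ℕ} {i j j' : Fin (n + 1)} {m : ℕ}
    (h : ((i : ℕ) + j + m) % (n + 1) + 1 = ((i : ℕ) + j' + m) % (n + 1) + 1) : j = j' := by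
  have h1 : (i : ℕ) + j + m ≡ (i : ℕ) + j' + m [MOD (n + 1)] := Nat.succ_injective h
  have h2 : (j : ℕ) ≡ j' [MOD (n + 1)] := Nat.ModEq.add_left_cancel' _
    (Nat.ModEq.add_right_cancel' _ h1)
  exact Fin.ext (Nat.ModEq.eq_of_lt_of_lt h2 j.2 j'.2)

/-- The `(0, 0)` entry of the shifted Latin square is the color of the edge it belongs to. -/
lemma latin_zero {n c : ℕ} (hc : c ∈ Finset.Icc 1 (n + 1)) :
    c = (((0 : Fin (n + 1)) : ℕ) + ((0 : Fin (n + 1)) : ℕ) + (c - 1)) % (n + 1) + 1 := by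
  rw [Finset.mem_Icc] at hc
  rw [Fin.val_zero, Nat.mod_eq_of_lt (by omega)]
  omega

variable {G : Multigraph α β} {p : β → Bool → α} {n : ℕ}

lemma ends_injective (hp : ∀ e, G.ends e = s(p e false, p e true)) {e : β} {s s' : Bool}
    (h : p e s = p e s') : s = s' := by
  have hd := G.not_isDiag e
  rw [hp, Sym2.mk_isDiag_iff] at hd
  cases s <;> cases s' <;> simp_all

lemma end_mem (hp : ∀ e, G.ends e = s(p e false, p e true)) (e : β) (s : Bool) :
    p e s ∈ G.ends e := by
  rw [hp]
  cases s <;> simp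

lemma exists_end (hp : ∀ e, G.ends e = s(p e false, p e true)) {e : β} {x : α}
    (h : x ∈ G.ends e) : ∃ s, x = p e s := by
  rw [hp, Sym2.mem_iff] at h
  rcases h with h | h
  exacts [⟨_, h⟩, ⟨_, h⟩]

lemma extend_proper (hp : ∀ e, G.ends e = s(p e false, p e true)) {f : β → ℕ}
    (hf : G.IsProper (n + 1) f) : IsProperEdgeColoring (gadget p n) (n + 1) (extend n f) := by
  rw [isProper_iff]
  constructor
  · rintro (a | ⟨e, s, i⟩) (b | ⟨e', s', j⟩) h
    · exact h.elim
    · exact hf.1 e'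
    · exact hf.1 e
    · obtain ⟨rfl, -, -⟩ := h
      have := Nat.mod_lt ((i : ℕ) + j + (f e - 1)) (show 0 < n + 1 by omega)
      simp only [extend, Sym2.lift_mk, extFun, if_true, Finset.mem_Icc]
      omega
  · rintro (a | ⟨e, s, i⟩) (b | ⟨e', s', j⟩) (b' | ⟨e'', s'', j'⟩) h h' hc
    · exact h.elim
    · exact h.elim
    · exact h'.elim
    · obtain ⟨rfl, ha⟩ := h
      obtain ⟨rfl, ha'⟩ := h'
      have he : e' = e'' := by
        by_contra hne
        exact hf.2 e' e'' hne ⟨a, ha ▸ end_mem hp e' s', ha' ▸ end_mem hp e'' s''⟩ hc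
      subst he
      rw [ends_injective hp (ha.symm.trans ha')]
    · rw [h.2, h'.2]
    · obtain ⟨rfl, -⟩ := h
      obtain ⟨rfl, -, h0⟩ := h'
      simp only [extend, Sym2.lift_mk, extFun, if_true] at hc
      exact absurd ⟨rfl, (latin_cancel ((latin_zero (hf.1 e)).symm.trans hc)).symm⟩ h0
    · obtain ⟨rfl, -⟩ := h'
      obtain ⟨rfl, -, h0⟩ := h
      simp only [extend, Sym2.lift_mk, extFun, if_true] at hc
      exact absurd ⟨rfl, (latin_cancel ((latin_zero (hf.1 e)).symm.trans hc.symm)).symm⟩ h0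
    · obtain ⟨rfl, hs, -⟩ := h
      obtain ⟨rfl, hs', -⟩ := h'
      simp only [extend, Sym2.lift_mk, extFun, if_true] at hc
      have hss : s' = s'' := by
        cases s <;> cases s' <;> cases s'' <;> simp_all
      rw [latin_cancel hc, hss]

/-- An `(n+1) × (n+1)` array with entries in `{1, …, n+1}` whose rows are injective when the corner
is `a`, and whose columns are injective when the corner is `b`, satisfies `a = b`: the columns then
contain every value, and if `a ≠ b` the `n + 1` occurrences of `a` outside the corner would lie in
distinct rows, none of them the row `0`. -/
lemma latin_corner {M : Fin (n + 1) → Fin (n + 1) → ℕ} {a b : ℕ}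
    (ha : a ∈ Finset.Icc 1 (n + 1))
    (hcol : ∀ j, Set.MapsTo (fun i => if i = 0 ∧ j = 0 then b else M i j) Set.univ
      (Finset.Icc 1 (n + 1) : Set ℕ))
    (hinj : ∀ j, Function.Injective (fun i => if i = 0 ∧ j = 0 then b else M i j))
    (hrow : ∀ i, Function.Injective (fun j => if i = 0 ∧ j = 0 then a else M i j)) :
    a = b := by
  by_contra hab
  have hsurj : ∀ j, ∃ i, (if i = 0 ∧ j = 0 then b else M i j) = a := by
    intro j
    have him : Finset.univ.image (fun i => if i = 0 ∧ j = 0 then b else M i j)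
        = Finset.Icc 1 (n + 1) := by
      refine Finset.eq_of_subset_of_card_le ?_ ?_
      · intro x hx
        obtain ⟨i, -, rfl⟩ := Finset.mem_image.1 hx
        exact hcol j (Set.mem_univ i)
      · rw [Finset.card_image_of_injective _ (hinj j)]
        simp
    rw [← him] at ha
    obtain ⟨i, -, hi⟩ := Finset.mem_image.1 ha
    exact ⟨i, hi⟩
  choose r hr using hsurj
  have hne : ∀ j, ¬ (r j = 0 ∧ j = 0) := by
    intro j h
    have := hr j
    rw [if_pos h] at this
    exact hab this.symm
  have hM : ∀ j, M (r j) j = a := fun j => by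
    have := hr j
    rwa [if_neg (hne j)] at this
  have hrinj : Function.Injective r := by
    intro j j' h
    refine hrow (r j) ?_
    dsimp only
    rw [if_neg (hne j), if_neg (h ▸ hne j'), hM, h, hM]
  obtain ⟨j, hj⟩ := (Finite.surjective_of_injective hrinj) 0
  refine hne j ⟨hj, hrow 0 ?_⟩
  have h1 := hne j
  have h2 := hM j
  rw [hj] at h1 h2
  dsimp only
  rw [if_neg h1, h2, if_pos ⟨rfl, rfl⟩]

/-- Both edges attaching the gadget of `e` to the ends of `e` have the same color. -/
lemma pendant_eq {c : Sym2 (α ⊕ (β × Bool × Fin (n + 1))) → ℕ}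
    (hc : IsProperEdgeColoring (gadget p n) (n + 1) c) (e : β) (s : Bool) :
    c s(.inl (p e s), .inr (e, s, 0)) = project p n c e := by
  rw [isProper_iff] at hc
  obtain ⟨h1, h2⟩ := hc
  -- The neighbor of index `j` of the vertex `(e, s, i)`, the end `p e s` replacing the deleted one.
  let nb : Bool → Fin (n + 1) → Fin (n + 1) → α ⊕ (β × Bool × Fin (n + 1)) := fun s i j =>
    if i = 0 ∧ j = 0 then .inl (p e s) else .inr (e, !s, j)
  have hadj : ∀ s i j, (gadget p n).Adj (.inr (e, s, i)) (nb s i j) := by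
    intro s i j
    by_cases h : i = 0 ∧ j = 0
    · simp only [nb, if_pos h]
      exact ⟨h.1, rfl⟩
    · simp only [nb, if_neg h]
      exact ⟨rfl, by simp, h⟩
  have hnb : ∀ s i, Function.Injective (nb s i) := by
    intro s i j j' h
    by_cases hj : i = 0 ∧ j = 0 <;> by_cases hj' : i = 0 ∧ j' = 0
    · rw [hj.2, hj'.2]
    · simp [nb, hj] at h
      exact absurd ⟨hj.1, h⟩ hj'
    · simp [nb, hj'] at h
      exact absurd ⟨hj'.1, h⟩ hj
    · simp only [nb, if_neg hj, if_neg hj'] at h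
      simpa using h
  have hinj : ∀ s i, Function.Injective fun j => c s(.inr (e, s, i), nb s i j) :=
    fun s i j j' h => hnb s i (h2 _ _ _ (hadj s i j) (hadj s i j') h)
  cases s
  · rfl
  refine (latin_corner (n := n) (M := fun i j => c s(.inr (e, false, i), .inr (e, true, j)))
    (a := c s(.inl (p e false), .inr (e, false, 0)))
    (b := c s(.inl (p e true), .inr (e, true, 0)))
    (h1 _ _ ⟨rfl, rfl⟩) ?_ ?_ ?_).symm
  all_goals
    have hL : ∀ i j, c s(.inr (e, false, i), nb false i j) =
        if i = 0 ∧ j = 0 then c s(.inl (p e false), .inr (e, false, 0))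
        else c s(.inr (e, false, i), .inr (e, true, j)) := by
      intro i j
      by_cases h : i = 0 ∧ j = 0
      · simp only [nb, if_pos h]
        rw [h.1, Sym2.eq_swap]
      · simp only [nb, if_neg h, Bool.not_false]
    have hR : ∀ i j, c s(.inr (e, true, j), nb true j i) =
        if i = 0 ∧ j = 0 then c s(.inl (p e true), .inr (e, true, 0))
        else c s(.inr (e, false, i), .inr (e, true, j)) := by
      intro i j
      by_cases h : i = 0 ∧ j = 0
      · simp only [nb, if_pos h, if_pos h.symm]
        rw [h.2, Sym2.eq_swap]
      · simp only [nb, if_neg h, if_neg (fun hh => h (And.symm hh)), Bool.not_true]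
        rw [Sym2.eq_swap]
  · intro j i _
    have := h1 _ _ (hadj true j i)
    rwa [hR] at this
  · intro j
    simpa only [hR] using hinj true j
  · intro i
    simpa only [hL] using hinj false i

lemma project_proper (hp : ∀ e, G.ends e = s(p e false, p e true))
    {c : Sym2 (α ⊕ (β × Bool × Fin (n + 1))) → ℕ}
    (hc : IsProperEdgeColoring (gadget p n) (n + 1) c) : G.IsProper (n + 1) (project p n c) := by
  refine ⟨fun e => hc.1 _ ⟨rfl, rfl⟩, ?_⟩
  rintro e₁ e₂ hne ⟨x, hx₁, hx₂⟩ h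
  obtain ⟨s₁, h₁⟩ := exists_end hp hx₁
  obtain ⟨s₂, h₂⟩ := exists_end hp hx₂
  rw [← pendant_eq hc e₁ s₁, ← pendant_eq hc e₂ s₂, ← h₁, ← h₂] at h
  rw [isProper_iff] at hc
  have := hc.2 (.inl x) (.inr (e₁, s₁, 0)) (.inr (e₂, s₂, 0)) ⟨rfl, h₁⟩ ⟨rfl, h₂⟩ h
  simp only [Sum.inr.injEq, Prod.mk.injEq] at this
  exact hne this.1

lemma project_differ [Finite α] [Finite β] {m : ℕ}
    {c d : Sym2 (α ⊕ (β × Bool × Fin (n + 1))) → ℕ}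
    (h : DifferAtMost (gadget p n) m c d) :
    Multigraph.MDifferAtMost m (project p n c) (project p n d) := by
  refine le_trans (Set.ncard_le_ncard ?_ ?_) h
  · intro j hj hcd
    refine hj ?_
    ext e
    have he := Set.ext_iff.1 hcd s(.inl (p e false), .inr (e, false, 0))
    have hmem : s(.inl (p e false), .inr (e, false, 0)) ∈ (gadget p n).edgeSet := ⟨rfl, rfl⟩
    exact ⟨fun h => (he.1 ⟨hmem, h⟩).2, fun h => (he.2 ⟨hmem, h⟩).2⟩
  · -- Only the finitely many colors used by `c` or `d` can have different classes.
    refine ((Set.finite_range c).union (Set.finite_range d)).subset fun j hj => ?_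
    by_contra hn
    refine hj ?_
    ext e
    exact ⟨fun h => absurd (Or.inl ⟨e, h.2⟩) hn, fun h => absurd (Or.inr ⟨e, h.2⟩) hn⟩

lemma le_maxDeg_gadget [Finite α] [Finite β] (e : β) : n + 1 ≤ maxDeg (gadget p n) := by
  refine le_trans ?_ (le_ciSup (Set.finite_range (deg (gadget p n))).bddAbove
    (.inr (e, false, 0)))
  have h := Set.ncard_le_ncard_of_injOn (s := (Set.univ : Set (Fin (n + 1))))
    (t := (gadget p n).neighborSet (.inr (e, false, 0)))
    (fun j => if j = 0 then .inl (p e false) else .inr (e, true, j)) ?_ ?_ (Set.toFinite _)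
  · simpa [deg] using h
  · intro j _
    split_ifs with hj
    · exact ⟨rfl, rfl⟩
    · exact ⟨rfl, by simp, fun h => hj h.2⟩
  · intro j _ j' _ h
    dsimp only at h
    split_ifs at h with hj hj'
    · rw [hj, hj']
    · simpa using h

end Gadget

/-! ### The Class 1 graph of a multigraph -/

/-- The gadget graph has the properties required of `F_G`, if `G` has an edge. -/
lemma gadget_spec {α β : Type*} [Finite α] [Finite β] {G : Multigraph α β} {p : β → Bool → α}
    {n : ℕ} (hp : ∀ e, G.ends e = s(p e false, p e true)) (hn : G.mChromIdx = n + 1) (e : β) :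
    chromIdx (gadget p n) = maxDeg (gadget p n) ∧ chromIdx (gadget p n) = G.mChromIdx ∧
      G.mTransIdx ≤ transIdx (gadget p n) := by
  obtain ⟨f₀, hf₀⟩ := exists_isProper G
  rw [hn] at hf₀
  have hext := extend_proper hp hf₀
  have hle : chromIdx (gadget p n) ≤ n + 1 := Nat.sInf_le ⟨_, hext⟩
  have hge : maxDeg (gadget p n) ≤ chromIdx (gadget p n) := by
    obtain ⟨c, hc⟩ := Nat.sInf_mem (s := {t | ∃ f, IsProperEdgeColoring (gadget p n) t f})
      ⟨_, _, hext⟩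
    exact maxDeg_le hc
  have hdeg : n + 1 ≤ maxDeg (gadget p n) := le_maxDeg_gadget e
  have hchrom : chromIdx (gadget p n) = n + 1 := by omega
  refine ⟨by omega, by omega, ?_⟩
  have hmem := Nat.sInf_mem (transIdx_set_nonempty (gadget p n))
  change transIdx (gadget p n) ∈ _ at hmem
  obtain ⟨h2, h⟩ := hmem
  rw [hchrom] at h
  refine Nat.sInf_le ⟨h2, fun f g hf hg => ?_⟩
  rw [hn] at hf hg ⊢
  obtain ⟨k, H, hk, h0, hk', hH, hd⟩ := h _ _ (extend_proper hp hf) (extend_proper hp hg)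
  refine ⟨k, fun i => project p n (H i), hk, ?_, ?_, fun i hi => project_proper hp (hH i hi),
    fun i hi => project_differ (hd i hi)⟩
  · dsimp only
    rw [h0, project_extend]
  · dsimp only
    rw [hk', project_extend]

/-- An edgeless multigraph is served by the graph without vertices. -/
lemma empty_spec {α β : Type*} [IsEmpty β] (G : Multigraph α β) :
    chromIdx (⊥ : SimpleGraph Empty) = maxDeg (⊥ : SimpleGraph Empty) ∧
      chromIdx (⊥ : SimpleGraph Empty) = G.mChromIdx ∧
      G.mTransIdx ≤ transIdx (⊥ : SimpleGraph Empty) := by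
  have hb : IsProperEdgeColoring (⊥ : SimpleGraph Empty) 0 (fun _ => 0) := by
    simp [IsProperEdgeColoring]
  have hc : chromIdx (⊥ : SimpleGraph Empty) = 0 := Nat.le_zero.1 (Nat.sInf_le ⟨_, hb⟩)
  have hm : maxDeg (⊥ : SimpleGraph Empty) = 0 := Nat.le_zero.1 (maxDeg_le hb)
  have hG : G.mChromIdx = 0 :=
    Nat.le_zero.1 (Nat.sInf_le ⟨fun _ => 0, fun e => isEmptyElim e, fun e => isEmptyElim e⟩)
  refine ⟨by omega, by omega, le_trans (b := 2) ?_
    (Nat.sInf_mem (transIdx_set_nonempty (⊥ : SimpleGraph Empty))).1⟩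
  refine Nat.sInf_le ⟨le_rfl, fun f g hf _ => ?_⟩
  exact ⟨1, fun _ => f, le_rfl, rfl, Subsingleton.elim _ _, fun _ _ => hf,
    fun _ _ => by simp [Multigraph.MDifferAtMost]⟩

lemma exists_class_one {α β : Type} [Finite α] [Finite β] (G : Multigraph α β) :
    ∃ (γ : Type) (_ : Finite γ) (F : SimpleGraph γ),
      chromIdx F = maxDeg F ∧ chromIdx F = G.mChromIdx ∧ G.mTransIdx ≤ transIdx F := by
  rcases isEmpty_or_nonempty β with hβ | ⟨⟨e⟩⟩
  · exact ⟨Empty, inferInstance, ⊥, empty_spec G⟩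
  · have hends : ∀ e, ∃ q : Bool → α, G.ends e = s(q false, q true) := by
      intro e
      induction h : G.ends e using Sym2.ind with
      | _ x y => exact ⟨fun s => cond s y x, rfl⟩
    choose p hp using hends
    obtain ⟨f, hf⟩ := exists_isProper G
    have hpos := Finset.mem_Icc.1 (hf.1 e)
    obtain ⟨n, hn⟩ : ∃ n, G.mChromIdx = n + 1 := ⟨G.mChromIdx - 1, by omega⟩
    exact ⟨_, inferInstance, gadget p n, gadget_spec hp hn e⟩

/-- For every (multi)graph `G` there is a Class 1 simple graph `F_G` with
`χ'(F_G) = χ'(G)` and `χ'_trans(G) ≤ χ'_trans(F_G)`; consequently, a uniform bound on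
`χ'_trans` over all multigraphs exists iff one exists over all Class 1 simple graphs. -/
theorem trans_index_bounded_iff_bounded_for_class_one :
    (∀ (α β : Type), Finite α → Finite β → ∀ G : Multigraph α β,
      ∃ (γ : Type) (_ : Finite γ) (F : SimpleGraph γ),
        chromIdx F = maxDeg F ∧ chromIdx F = G.mChromIdx ∧ G.mTransIdx ≤ transIdx F) ∧
    ((∃ C : ℕ, ∀ (α β : Type), Finite α → Finite β → ∀ G : Multigraph α β,
        G.mTransIdx ≤ C) ↔
      (∃ C : ℕ, ∀ (γ : Type), Finite γ → ∀ F : SimpleGraph γ,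
        chromIdx F = maxDeg F → transIdx F ≤ C)) := by
  refine ⟨fun α β _ _ G => exists_class_one G, ?_, ?_⟩
  · rintro ⟨C, hC⟩
    refine ⟨C, fun γ _ F _ => (transIdx_le_ofSimple F).trans (hC γ F.edgeSet ‹_› inferInstance _)⟩
  · rintro ⟨C, hC⟩
    refine ⟨C, fun α β _ _ G => ?_⟩
    obtain ⟨γ, hγ, F, h1, -, h3⟩ := exists_class_one G
    exact h3.trans (hC γ hγ F h1)

end EdgeTrans
end

section
/- For integers n ≥ 3 and p ≥ 1, let H(p,n) be the graph whose vertex set is the disjoint union V_1 ∪ … ∪ V_{2n} of sets of cardinality p, where two vertices are adjacent if and only if they both belong to V_1 ∪ V_{2n} or both belong to V_i ∪ V_{i+1} for some i ∈ {1,…,2n−1}. Then H(p,n) has exactly two partitions of its vertex set into n cliques of size 2p: namely {C_1,…,C_n} with C_i = V_{2i−1} ∪ V_{2i} for i = 1,…,n, and {R_1,…,R_n} with R_1 = V_{2n} ∪ V_1 and R_i = V_{2i−2} ∪ V_{2i−1} for i = 2,…,n. -/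
/-!
Write `B_k = V_k ∪ V_{k+1}` (indices modulo `2n`). Since `2n > 3`, a clique cannot meet three
different classes, nor two classes that are not consecutive, so it lies in some `B_k`; as
`|B_k| = 2p`, the cliques of size `2p` are exactly the blocks `B_k` (`exists_eq_block`).

Let `P` be a partition into such cliques. If `B_k ∈ P`, then the part of `P` containing a vertex
of `V_{k+2}` is `B_{k+1}` or `B_{k+2}`, and the former meets `B_k` in `V_{k+1}`; hence
`B_{k+2} ∈ P` (`block_add_two_mem`). A vertex of `V_0` lies in `B_0` or `B_{-1}`, so `P` contains
all `B_{2i}` or all `B_{2i-1}`, and both of these families already consist of `n` blocks.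
-/

open SimpleGraph Set

namespace EdgeTrans

universe u v

variable {V : Type*} {W : Type*}

/-- The block `V_k ∪ V_{k+1}` of `H(p,n)`. -/
def block (p n : ℕ) (k : ZMod (2 * n)) : Set (ZMod (2 * n) × Fin p) :=
  {x | x.1 = k ∨ x.1 = k + 1}

/-- The family of blocks `V_k ∪ V_{k+1}`, `k = c, c + 2, …, c + 2(n - 1)`. The choices `c = 0` and
`c = -1` give `Cpart` and `Rpart`. -/
def blocks (p n : ℕ) (c : ZMod (2 * n)) : Set (Set (ZMod (2 * n) × Fin p)) :=
  Set.range fun i : Fin n => block p n (((2 * (i : ℕ) : ℕ) : ZMod (2 * n)) + c)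

theorem Cpart_eq_blocks (p n : ℕ) : Cpart p n = blocks p n 0 := by
  ext s
  simp only [Cpart, blocks, block, Set.mem_ofPred_eq, Set.mem_range, add_zero, Nat.cast_add,
    Nat.cast_one, eq_comm]

theorem Rpart_eq_blocks (p n : ℕ) : Rpart p n = blocks p n (-1) := by
  ext s
  simp only [Rpart, blocks, block, Set.mem_ofPred_eq, Set.mem_range, ← sub_eq_add_neg,
    sub_add_cancel, @eq_comm _ s]

theorem natCast_ne_zero {n k : ℕ} (hk : 0 < k) (hkn : k < 2 * n) :
    (k : ZMod (2 * n)) ≠ 0 := by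
  rw [Ne, ZMod.natCast_eq_zero_iff]
  exact Nat.not_dvd_of_pos_of_lt hk hkn

theorem natCast_inj {n a b : ℕ} (ha : a < 2 * n) (hb : b < 2 * n)
    (h : (a : ZMod (2 * n)) = b) : a = b := by
  rwa [ZMod.natCast_eq_natCast_iff', Nat.mod_eq_of_lt ha, Nat.mod_eq_of_lt hb] at h

theorem block_injective {p n : ℕ} (hn : 3 ≤ n) (hp : 1 ≤ p) :
    Function.Injective (block p n) := by
  intro k l h
  have two : ((2 : ℕ) : ZMod (2 * n)) ≠ 0 := natCast_ne_zero (by omega) (by omega)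
  have h1 : ((k, ⟨0, hp⟩) : ZMod (2 * n) × Fin p) ∈ block p n l := h ▸ Or.inl rfl
  have h2 : ((l, ⟨0, hp⟩) : ZMod (2 * n) × Fin p) ∈ block p n k := h ▸ Or.inl rfl
  rcases h1 with h1 | h1
  · exact h1
  rcases h2 with h2 | h2
  · exact h2.symm
  · simp only at h1 h2
    exact absurd (by push_cast; linear_combination -h1 - h2) two

theorem block_ncard {p n : ℕ} (hn : 3 ≤ n) (k : ZMod (2 * n)) :
    (block p n k).ncard = 2 * p := by
  have one : ((1 : ℕ) : ZMod (2 * n)) ≠ 0 := natCast_ne_zero (by omega) (by omega)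
  have h : block p n k = ({k, k + 1} : Set (ZMod (2 * n))) ×ˢ (Set.univ : Set (Fin p)) := by
    ext x
    simp [block]
  rw [h, Set.ncard_prod, Set.ncard_univ, Nat.card_fin, Set.ncard_pair]
  intro h
  exact one (by push_cast; linear_combination -h)

theorem block_isClique {p n : ℕ} (k : ZMod (2 * n)) :
    (Hgraph p n).IsClique (block p n k) := by
  intro a ha b hb hab
  rw [Hgraph, SimpleGraph.fromRel_adj]
  refine ⟨hab, ?_⟩
  rcases ha with ha | ha <;> rcases hb with hb | hb <;> simp [ha, hb]

/-- Every clique of `H(p,n)` of the maximum size `2p` is a block. -/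
theorem exists_eq_block {p n : ℕ} (hn : 3 ≤ n) (hp : 1 ≤ p)
    {s : Set (ZMod (2 * n) × Fin p)} (hs : (Hgraph p n).IsClique s) (hc : s.ncard = 2 * p) :
    ∃ k, s = block p n k := by
  have : NeZero (2 * n) := ⟨by omega⟩
  have one : ((1 : ℕ) : ZMod (2 * n)) ≠ 0 := natCast_ne_zero (by omega) (by omega)
  have two : ((2 : ℕ) : ZMod (2 * n)) ≠ 0 := natCast_ne_zero (by omega) (by omega)
  have three : ((3 : ℕ) : ZMod (2 * n)) ≠ 0 := natCast_ne_zero (by omega) (by omega)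
  have key : ∀ a ∈ s, ∀ b ∈ s, b.1 = a.1 ∨ b.1 = a.1 + 1 ∨ a.1 = b.1 + 1 := by
    intro a ha b hb
    by_cases hab : a = b
    · simp [hab]
    · have := hs ha hb hab
      rw [Hgraph, SimpleGraph.fromRel_adj] at this
      grind
  suffices h : ∃ k, s ⊆ block p n k by
    obtain ⟨k, hk⟩ := h
    exact ⟨k, Set.eq_of_subset_of_ncard_le hk (by rw [block_ncard hn, hc]) (Set.toFinite _)⟩
  obtain ⟨a, ha⟩ : s.Nonempty := Set.nonempty_of_ncard_ne_zero (by omega)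
  by_cases h : ∃ b ∈ s, b.1 = a.1 + 1
  · obtain ⟨b, hb, hba⟩ := h
    refine ⟨a.1, fun x hx => ?_⟩
    rcases key a ha x hx with h1 | h1 | h1
    · exact Or.inl h1
    · exact Or.inr h1
    -- `x` lies two classes before `b`, which would force `2`, `1` or `3` to vanish mod `2n`.
    · exfalso
      rcases key b hb x hx with h2 | h2 | h2
      · exact two (by push_cast; linear_combination -h2 - h1 - hba)
      · exact three (by push_cast; linear_combination -h2 - h1 - hba)
      · exact one (by push_cast; linear_combination h2 - h1 - hba)
  · refine ⟨a.1 - 1, fun x hx => ?_⟩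
    rcases key a ha x hx with h1 | h1 | h1
    · exact Or.inr (by rw [h1, sub_add_cancel])
    · exact absurd ⟨x, hx, h1⟩ h
    · exact Or.inl (by rw [h1, add_sub_cancel_right])

theorem blocks_ncard {p n : ℕ} (hn : 3 ≤ n) (hp : 1 ≤ p) (c : ZMod (2 * n)) :
    (blocks p n c).ncard = n := by
  rw [blocks, ← Set.image_univ, Set.ncard_image_of_injective, Set.ncard_univ, Nat.card_fin]
  intro i j h
  have := natCast_inj (by omega) (by omega) (add_right_cancel (block_injective hn hp h))
  omega

theorem blocks_isCliquePartition {p n : ℕ} (hn : 3 ≤ n) (hp : 1 ≤ p) (c : ZMod (2 * n)) :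
    IsCliquePartition (Hgraph p n) n (2 * p) (blocks p n c) := by
  have : NeZero (2 * n) := ⟨by omega⟩
  refine ⟨blocks_ncard hn hp c, ?_, ?_, ?_⟩
  · rintro _ ⟨i, rfl⟩
    exact ⟨block_isClique _, block_ncard hn _⟩
  · refine Set.eq_univ_of_forall fun x => ?_
    have hlt := ZMod.val_lt (x.1 - c)
    have hx : (((x.1 - c).val : ℕ) : ZMod (2 * n)) = x.1 - c := ZMod.natCast_zmod_val _
    refine ⟨_, ⟨⟨(x.1 - c).val / 2, by omega⟩, rfl⟩, ?_⟩
    rcases Nat.even_or_odd' (x.1 - c).val with ⟨m, hm | hm⟩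
    · left
      rw [hm] at hx
      simp only [hm]
      rw [Nat.mul_div_cancel_left _ (by omega), hx, sub_add_cancel]
    · right
      rw [hm] at hx
      simp only [hm]
      rw [show (2 * m + 1) / 2 = m by omega]
      push_cast at hx ⊢
      linear_combination -hx
  · rintro _ ⟨i, rfl⟩ _ ⟨j, rfl⟩ hne
    rw [Set.disjoint_left]
    intro x hi hj
    have hi' := i.isLt
    have hj' := j.isLt
    rcases hi with hi | hi <;> rcases hj with hj | hj
    · exact hne (congrArg (block p n) (hi.symm.trans hj))
    · have := natCast_inj (n := n) (a := 2 * (i : ℕ)) (b := 2 * (j : ℕ) + 1) (by omega)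
        (by omega) (by push_cast at hi hj ⊢; linear_combination hj - hi)
      omega
    · have := natCast_inj (n := n) (a := 2 * (i : ℕ) + 1) (b := 2 * (j : ℕ)) (by omega)
        (by omega) (by push_cast at hi hj ⊢; linear_combination hj - hi)
      omega
    · exact hne (congrArg (block p n) (add_right_cancel (hi.symm.trans hj)))

/-- The part of a clique partition containing a vertex of `V_k` is one of the two blocks
containing `V_k`. -/
theorem block_mem_or {p n : ℕ} (hn : 3 ≤ n) (hp : 1 ≤ p)
    {P : Set (Set (ZMod (2 * n) × Fin p))}
    (hP : IsCliquePartition (Hgraph p n) n (2 * p) P) (k : ZMod (2 * n)) :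
    block p n k ∈ P ∨ block p n (k - 1) ∈ P := by
  obtain ⟨-, hcl, hcov, -⟩ := hP
  have hx : ((k, ⟨0, hp⟩) : ZMod (2 * n) × Fin p) ∈ ⋃₀ P := hcov ▸ Set.mem_univ _
  obtain ⟨s, hs, hxs⟩ := hx
  obtain ⟨l, rfl⟩ := exists_eq_block hn hp (hcl s hs).1 (hcl s hs).2
  rcases hxs with h | h
  · exact Or.inl ((show k = l from h) ▸ hs)
  · right
    rwa [show k = l + 1 from h, add_sub_cancel_right]

theorem block_add_two_mem {p n : ℕ} (hn : 3 ≤ n) (hp : 1 ≤ p)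
    {P : Set (Set (ZMod (2 * n) × Fin p))}
    (hP : IsCliquePartition (Hgraph p n) n (2 * p) P) {k : ZMod (2 * n)}
    (hk : block p n k ∈ P) : block p n (k + 2) ∈ P := by
  have one : ((1 : ℕ) : ZMod (2 * n)) ≠ 0 := natCast_ne_zero (by omega) (by omega)
  rcases block_mem_or hn hp hP (k + 2) with h | h
  · exact h
  · exfalso
    rw [show k + 2 - 1 = k + 1 by ring] at h
    have hne : block p n k ≠ block p n (k + 1) := fun he =>
      one (by push_cast; linear_combination -block_injective hn hp he)
    exact Set.disjoint_left.1 (hP.2.2.2 hk h hne)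
      (show ((k + 1, ⟨0, hp⟩) : ZMod (2 * n) × Fin p) ∈ _ from Or.inr rfl) (Or.inl rfl)

/-- A clique partition containing `V_c ∪ V_{c+1}` is determined: it is the alternate family of
blocks starting there. -/
theorem eq_blocks {p n : ℕ} (hn : 3 ≤ n) (hp : 1 ≤ p)
    {P : Set (Set (ZMod (2 * n) × Fin p))}
    (hP : IsCliquePartition (Hgraph p n) n (2 * p) P) {c : ZMod (2 * n)}
    (hc : block p n c ∈ P) : P = blocks p n c := by
  have step : ∀ i : ℕ, block p n (((2 * i : ℕ) : ZMod (2 * n)) + c) ∈ P := by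
    intro i
    induction i with
    | zero => simpa using hc
    | succ i ih =>
      convert block_add_two_mem hn hp hP ih using 2
      push_cast
      ring
  symm
  refine Set.eq_of_subset_of_ncard_le ?_ ?_ (Set.finite_of_ncard_ne_zero ?_)
  · rintro _ ⟨i, rfl⟩
    exact step i
  · rw [hP.1, blocks_ncard hn hp]
  · rw [hP.1]
    omega

/-- For `n ≥ 3`, `p ≥ 1`, the graph `H(p,n)` has exactly two partitions of its
vertex set into `n` cliques of size `2p`: `{C_1,…,C_n}` and `{R_1,…,R_n}`. -/
theorem Hgraph_two_clique_partitions (p n : ℕ) (hn : 3 ≤ n) (hp : 1 ≤ p) :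
    IsCliquePartition (Hgraph p n) n (2 * p) (Cpart p n) ∧
    IsCliquePartition (Hgraph p n) n (2 * p) (Rpart p n) ∧
    Cpart p n ≠ Rpart p n ∧
    ∀ P : Set (Set (ZMod (2 * n) × Fin p)),
      IsCliquePartition (Hgraph p n) n (2 * p) P → P = Cpart p n ∨ P = Rpart p n := by
  rw [Cpart_eq_blocks, Rpart_eq_blocks]
  refine ⟨blocks_isCliquePartition hn hp 0, blocks_isCliquePartition hn hp (-1), ?_, ?_⟩
  · intro h
    -- Equality would put `V_0 ∪ V_1` into the second family, making `1` even modulo `2n`.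
    have h0 : block p n 0 ∈ blocks p n 0 := ⟨⟨0, by omega⟩, by simp⟩
    rw [h] at h0
    obtain ⟨i, hi⟩ := h0
    have hi' := block_injective hn hp hi
    have := natCast_inj (n := n) (a := 2 * (i : ℕ)) (b := 1) (by omega) (by omega)
      (by push_cast at hi' ⊢; linear_combination hi')
    omega
  · intro P hP
    rcases block_mem_or hn hp hP 0 with h | h
    · exact Or.inl (eq_blocks hn hp hP h)
    · rw [zero_sub] at h
      exact Or.inr (eq_blocks hn hp hP h)

end EdgeTrans
end
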